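/- For every integer k ≥ 2 and every ε > 0 there exists L > 0 with the following property. Let X₁, …, X_k be independent finitely supported random variables taking values in G = 𝔽₂ⁿ. Then there exists a subspace V ⊆ G with H[𝐔_V] ≤ L (H[X₁] + … + H[X_k]) such that H[π_V(X₁) + … + π_V(X_k)] ≥ H[π_V(X₁)] + … + H[π_V(X_k)] − ε (H[X₁] + … + H[X_k]). -/

import Mathlib

open Real Pointwise

noncomputable section

abbrev Fvec (n : ℕ) : Type := Fin n → ZMod 2

/-- Shannon entropy (natural log) of a finitely supported distribution. -/
def ent {A : Type*} (p : A → ℝ) : ℝ := ∑ᶠ a, Real.negMulLog (p a)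

/-- `p` is a (finitely supported) probability distribution. -/
def IsDist {A : Type*} (p : A → ℝ) : Prop := (∀ a, 0 ≤ p a) ∧ ∑ᶠ a, p a = 1

/-- Pushforward of a distribution along a map: the distribution of `f(X)` for `X ∼ p`. -/
def push {A B : Type*} (f : A → B) (p : A → ℝ) : B → ℝ := fun b => ∑ᶠ a ∈ f ⁻¹' {b}, p a

/-- Joint distribution of a pair of independent random variables. -/
def prodDist {A B : Type*} (p : A → ℝ) (q : B → ℝ) : A × B → ℝ := fun z => p z.1 * q z.2

/-- Distribution of `X + Y` for independent `X ∼ p`, `Y ∼ q`. -/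
def conv {A : Type*} [AddGroup A] (p q : A → ℝ) : A → ℝ := fun z => ∑ᶠ x, p x * q (z - x)

/-- The distribution of `X` conditioned on `U = b`, where `r` is the joint distribution of `(X, U)`. -/
def fiber {A B : Type*} (r : A × B → ℝ) (b : B) : A → ℝ := fun a => r (a, b) / push Prod.snd r b

/-- Conditional entropy `H[X | U]` of a joint distribution `r` of `(X, U)`. -/
def condEnt {A B : Type*} (r : A × B → ℝ) : ℝ := ∑ᶠ b, push Prod.snd r b * ent (fiber r b)

/-- Doubling mass `s[X ; Y]` (of independent copies with distributions `p`, `q`). -/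
def sDouble {A : Type*} [AddGroup A] (p q : A → ℝ) : ℝ := ent p + ent q - ent (conv p q)

/-- Conditional doubling mass `s[X | U ; Y | W] = 𝔼_{u ∼ U, w ∼ W} s[X_u ; Y_w]`,
where `r1`, `r2` are the joint distributions of `(X, U)` and `(Y, W)`. -/
def sCond {A U W : Type*} [AddGroup A] (r1 : A × U → ℝ) (r2 : A × W → ℝ) : ℝ :=
  ∑ᶠ u, ∑ᶠ w, push Prod.snd r1 u * push Prod.snd r2 w * sDouble (fiber r1 u) (fiber r2 w)

/-- Conditional mutual information `I[A : B | S]` of a joint distribution of `(A, B, S)`. -/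
def condMI {A B S : Type*} (r : A × B × S → ℝ) : ℝ :=
  ent (push (fun z => (z.1, z.2.2)) r) + ent (push (fun z => z.2) r)
    - ent r - ent (push (fun z => z.2.2) r)

/-- Uniform distribution on a set. -/
def unifOn {A : Type*} (s : Set A) : A → ℝ := s.indicator fun _ => (Nat.card s : ℝ)⁻¹

/-- Entropic Ruzsa distance `d[X ; Y]`. -/
def dRuzsa {A : Type*} [AddGroup A] (p q : A → ℝ) : ℝ := ent (conv p q) - ent p / 2 - ent q / 2

/-- Joint distribution of `(X, X + Y)` for independent `X ∼ p`, `Y ∼ q`. -/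
def jointSum {A : Type*} [AddGroup A] (p q : A → ℝ) : A × A → ℝ :=
  push (fun z : A × A => (z.1, z.1 + z.2)) (prodDist p q)

/-- Joint distribution of `(X, π_V(X))`. -/
def selfProj {n : ℕ} (V : Submodule (ZMod 2) (Fvec n)) (p : Fvec n → ℝ) :
    Fvec n × (Fvec n ⧸ V) → ℝ := push (fun x => (x, V.mkQ x)) p

/-- Joint distribution of independent `(X₁, X₂, Y₁, Y₂)` with `X₁, X₂ ∼ p` and `Y₁, Y₂ ∼ q`. -/
def quad {A : Type*} (p q : A → ℝ) : A × A × A × A → ℝ :=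
  fun z => p z.1 * p z.2.1 * q z.2.2.1 * q z.2.2.2

/-- Distribution of `X₁ + ⋯ + X_k` for independent `Xᵢ ∼ p i`. -/
def indepSum {A : Type*} [AddCommGroup A] (k : ℕ) (p : Fin k → A → ℝ) : A → ℝ :=
  push (fun x : Fin k → A => ∑ i, x i) (fun x => ∏ i, p i (x i))

/-- Statement `A(η, L, c)` from the paper. -/
def StA (η L c : ℝ) : Prop :=
  ∀ (n : ℕ) (p q : Fvec n → ℝ), IsDist p → IsDist q →
    ent (conv p q) ≤ (1 - η) * (ent p + ent q) →
    ∃ V : Submodule (ZMod 2) (Fvec n),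
      ent (unifOn (V : Set (Fvec n))) ≤ L * (ent p + ent q) ∧
      ent (push V.mkQ p) + ent (push V.mkQ q) ≤ (1 - c) * (ent p + ent q)

/-- Statement `B(η, ε, L)` from the paper. -/
def StB (η ε L : ℝ) : Prop :=
  ∀ (n : ℕ) (p q : Fvec n → ℝ), IsDist p → IsDist q →
    ∃ V : Submodule (ZMod 2) (Fvec n),
      ent (unifOn (V : Set (Fvec n))) ≤ L * (ent p + ent q) ∧
      ent (conv (push V.mkQ p) (push V.mkQ q)) ≥
        (1 - η) * (ent (push V.mkQ p) + ent (push V.mkQ q)) - ε * (ent p + ent q)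

/-!
Call a law `l`-reduced if quotienting by a subspace `V` never costs it more than `l log |V|` of
entropy. Quotienting the `k` given laws by a maximal subspace that costs them at least `l log |V|`
makes all of them `l`-reduced, with `log |V| ≤ l⁻¹ ∑ H[Xᵢ]`. By adding the variables one at a time
it therefore suffices to find, for every `η > 0`, an `l > 0` such that `l`-reduced laws have
doubling mass `H[X] + H[Y] - H[X + Y] ≤ η (H[X] + H[Y])` with all other laws.

Some `η < 1 / 2` is possible with `l = 1 / 4`, by the entropic polynomial Freiman–Ruzsa argument:
each of the two minimisers of a functional depending on `X` lives on a coset of the stabiliser of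
the other one, and a reduced `X` sees this stabiliser as expensive, so that `H[X + X']` exceeds
`H[X]` by a constant factor.

The constant is then lowered step by step. If `η` could not be lowered, `T = X + Y` would have
doubling mass nearly `2 η H[T]` with its copy `T'`, while the doubling masses of `T + T'` and of the
fibres of `T + T'` are bounded above; together these bounds make the fibring inequality nearly an
equality. By the Balog–Szemerédi–Gowers argument the sums of two fibres then nearly stabilise under
doubling. Such laws lose almost all of their entropy in a quotient, and so have small doubling mass
with a fibre. By the Kaimanovich–Vershik inequality the doubling mass of two fibres is even
smaller, but it has order `η² H[T]`.
-/

open Convexity Function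

/-- Finitely supported laws on `A`. Random variables enter only through their laws: independence is
expressed by product laws, and conditioning by families of laws indexed by the values of the
conditioning variable. -/
abbrev Law (A : Type*) := StdSimplex ℝ A

namespace Law

variable {A B C I J Ω : Type*}

/-- The expectation of `f` under the law `p`. -/
def expect (p : Law A) (f : A → ℝ) : ℝ := p.weights.sum fun a r ↦ r * f a

/-- The Shannon entropy of a law, in nats. -/
def entropy (p : Law A) : ℝ := p.weights.sum fun _ r ↦ negMulLog r

local notation "H[" p "]" => entropy p

lemma expect_eq_sum [Fintype A] (p : Law A) (f : A → ℝ) :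
    expect p f = ∑ a, p.weights a * f a :=
  Finsupp.sum_fintype _ _ fun _ ↦ zero_mul _

lemma expect_congr {p : Law A} {f g : A → ℝ} (h : ∀ a, p.weights a ≠ 0 → f a = g a) :
    expect p f = expect p g :=
  Finset.sum_congr rfl fun a ha ↦ congrArg _ (h a (Finsupp.mem_support_iff.1 ha))

lemma expect_mono_of_ne_zero {p : Law A} {f g : A → ℝ} (h : ∀ a, p.weights a ≠ 0 → f a ≤ g a) :
    expect p f ≤ expect p g :=
  Finset.sum_le_sum fun a ha ↦
    mul_le_mul_of_nonneg_left (h a (Finsupp.mem_support_iff.1 ha)) (p.weights_nonneg a)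

lemma expect_mono {p : Law A} {f g : A → ℝ} (h : ∀ a, f a ≤ g a) : expect p f ≤ expect p g :=
  expect_mono_of_ne_zero fun a _ ↦ h a

lemma expect_lt_expect {p : Law A} {f g : A → ℝ} (h : ∀ a, p.weights a ≠ 0 → f a ≤ g a)
    {a : A} (ha : p.weights a ≠ 0) (hlt : f a < g a) : expect p f < expect p g :=
  Finset.sum_lt_sum (fun b hb ↦ mul_le_mul_of_nonneg_left (h b (Finsupp.mem_support_iff.1 hb))
    (p.weights_nonneg b)) ⟨a, Finsupp.mem_support_iff.2 ha,
      mul_lt_mul_of_pos_left hlt ((p.weights_nonneg a).lt_of_ne' ha)⟩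

@[simp] lemma expect_const (p : Law A) (c : ℝ) : expect p (fun _ ↦ c) = c := by
  rw [expect, ← Finsupp.sum_mul, p.total, one_mul]

lemma expect_add (p : Law A) (f g : A → ℝ) :
    expect p (fun a ↦ f a + g a) = expect p f + expect p g := by
  simp only [expect, mul_add, Finsupp.sum_add]

lemma expect_sub (p : Law A) (f g : A → ℝ) :
    expect p (fun a ↦ f a - g a) = expect p f - expect p g := by
  simp only [expect, mul_sub, Finsupp.sum_sub]

lemma expect_const_mul (p : Law A) (c : ℝ) (f : A → ℝ) :
    expect p (fun a ↦ c * f a) = c * expect p f := by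
  simp only [expect, Finsupp.mul_sum, mul_left_comm]

lemma expect_nonneg {p : Law A} {f : A → ℝ} (h : ∀ a, 0 ≤ f a) : 0 ≤ expect p f := by
  simpa using expect_mono (p := p) h

lemma expect_comm (p : Law A) (q : Law B) (f : A → B → ℝ) :
    expect p (fun a ↦ expect q fun b ↦ f a b) = expect q fun b ↦ expect p fun a ↦ f a b := by
  simp only [expect, Finsupp.mul_sum]
  rw [Finsupp.sum_comm]
  simp only [mul_left_comm]

@[simp] lemma expect_single (a : A) (f : A → ℝ) : expect (.single a) f = f a := by
  simp [expect]

@[simp] lemma expect_map (p : Law A) (g : A → B) (f : B → ℝ) :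
    expect (p.map g) f = expect p fun a ↦ f (g a) :=
  Finsupp.sum_mapDomain_index (fun _ ↦ zero_mul _) fun _ _ _ ↦ add_mul _ _ _

@[simp] lemma expect_iConvexComb (P : Law I) (κ : I → Law A) (f : A → ℝ) :
    expect (iConvexComb P κ) f = expect P fun i ↦ expect (κ i) f := by
  simp [expect, iConvexComb, Finsupp.sum_mapDomain_index, Finsupp.sum_sum_index,
    Finsupp.sum_smul_index, Finsupp.mul_sum, add_mul, add_smul, mul_assoc]

lemma expect_indicator_eq_weights [DecidableEq A] (p : Law A) (a : A) :
    expect p (fun b ↦ if b = a then 1 else 0) = p.weights a := by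
  simp +contextual [expect, Finsupp.sum, eq_comm]

lemma ext_expect {p q : Law A} (h : ∀ f, expect p f = expect q f) : p = q := by
  classical
  ext a
  rw [← expect_indicator_eq_weights, ← expect_indicator_eq_weights, h]

/-- The law of the pair `(i, X)`, where `i` has law `P` and `X` has law `κ i` given `i`. -/
def joint (P : Law I) (κ : I → Law A) : Law (I × A) :=
  iConvexComb P fun i ↦ (κ i).map (Prod.mk i)

/-- The law of an independent pair. -/
def prod (p : Law A) (q : Law B) : Law (A × B) := joint p fun _ ↦ q

@[simp] lemma expect_joint (P : Law I) (κ : I → Law A) (f : I × A → ℝ) :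
    expect (joint P κ) f = expect P fun i ↦ expect (κ i) fun a ↦ f (i, a) := by
  simp [joint]

@[simp] lemma expect_prod (p : Law A) (q : Law B) (f : A × B → ℝ) :
    expect (prod p q) f = expect p fun a ↦ expect q fun b ↦ f (a, b) := by
  simp [prod]

lemma map_snd_joint (P : Law I) (κ : I → Law A) : (joint P κ).map Prod.snd = iConvexComb P κ :=
  ext_expect fun f ↦ by simp

lemma map_fst_joint (P : Law I) (κ : I → Law A) : (joint P κ).map Prod.fst = P :=
  ext_expect fun f ↦ by simp

lemma map_joint_mk (P : Law I) (κ : I → Law A) (f : I → A → B) :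
    (joint P κ).map (fun z ↦ (z.1, f z.1 z.2)) = joint P fun i ↦ (κ i).map (f i) :=
  ext_expect fun g ↦ by simp

lemma weights_joint (P : Law I) (κ : I → Law A) (i : I) (a : A) :
    (joint P κ).weights (i, a) = P.weights i * (κ i).weights a := by
  classical
  rw [← expect_indicator_eq_weights, ← expect_indicator_eq_weights P,
    ← expect_indicator_eq_weights (κ i), expect_joint, mul_comm, ← expect_const_mul]
  refine expect_congr fun j _ ↦ ?_
  by_cases hj : j = i <;> simp [hj]

lemma weights_le_weights_map (p : Law A) (f : A → B) (a : A) :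
    p.weights a ≤ (p.map f).weights (f a) := by
  classical
  rw [← expect_indicator_eq_weights, ← expect_indicator_eq_weights, expect_map]
  refine expect_mono fun b ↦ ?_
  by_cases hb : b = a
  · simp only [hb, if_true, le_refl]
  · rw [if_neg hb]
    split_ifs <;> norm_num

lemma weights_map_of_injective (p : Law A) {f : A → B} (hf : Injective f) (a : A) :
    (p.map f).weights (f a) = p.weights a :=
  Finsupp.mapDomain_apply hf _ _

lemma mul_weights_le_weights_iConvexComb (P : Law I) (κ : I → Law A) (i : I) (a : A) :
    P.weights i * (κ i).weights a ≤ (iConvexComb P κ).weights a := by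
  rw [← weights_joint, ← map_snd_joint]
  exact weights_le_weights_map _ Prod.snd (i, a)

lemma weights_pos {p : Law A} {a : A} (ha : p.weights a ≠ 0) : 0 < p.weights a :=
  (p.weights_nonneg a).lt_of_ne' ha

lemma weights_le_one (p : Law A) (a : A) : p.weights a ≤ 1 := by
  simpa using weights_le_weights_map p (fun _ ↦ ()) a

open Classical in
/-- The conditional law of the sample point given `Z = c`; it is `ω` itself, a junk value, when
`Z = c` has probability zero. -/
def cond (ω : Law Ω) (Z : Ω → C) (c : C) : Law Ω :=
  if h : ∃ a ∈ Z ⁻¹' {c}, ω.weights a ≠ 0 then ω.restrict (Z ⁻¹' {c}) h else ω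

open Classical in
lemma weights_map_mul_expect_cond (ω : Law Ω) (Z : Ω → C) (c : C) (f : Ω → ℝ) :
    (ω.map Z).weights c * expect (cond ω Z c) f =
      expect ω fun a ↦ if Z a = c then f a else 0 := by
  have hmass : (ω.map Z).weights c = ∑ a ∈ ω.weights.support with Z a = c, ω.weights a := by
    rw [← expect_indicator_eq_weights, expect_map, expect, Finsupp.sum, Finset.sum_filter]
    simp only [mul_ite, mul_one, mul_zero]
  have hexpect : (expect ω fun a ↦ if Z a = c then f a else 0) =
      ∑ a ∈ ω.weights.support with Z a = c, ω.weights a * f a := by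
    rw [expect, Finsupp.sum, Finset.sum_filter]
    simp only [mul_ite, mul_zero]
  rw [hmass, hexpect]
  by_cases h : ∃ a ∈ Z ⁻¹' {c}, ω.weights a ≠ 0
  · have hpos : 0 < ∑ a ∈ ω.weights.support with Z a = c, ω.weights a := by
      obtain ⟨a, hac, ha⟩ := h
      refine Finset.sum_pos (fun b hb ↦ weights_pos ?_)
        ⟨a, Finset.mem_filter.2 ⟨Finsupp.mem_support_iff.2 ha, hac⟩⟩
      exact Finsupp.mem_support_iff.1 (Finset.mem_filter.1 hb).1
    rw [cond, dif_pos h, expect, StdSimplex.weights_restrict, Finsupp.sum_smul_index (by simp)]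
    simp only [Finsupp.sum_filter_index, Set.mem_preimage, Set.mem_singleton_iff, mul_assoc,
      ← Finset.mul_sum]
    exact mul_inv_cancel_left₀ hpos.ne' _
  · have hempty : ω.weights.support.filter (fun a ↦ Z a = c) = ∅ := by
      push Not at h
      exact Finset.filter_eq_empty_iff.2 fun a ha hac ↦ Finsupp.mem_support_iff.1 ha (h a hac)
    simp [hempty]

lemma expect_map_expect_cond (ω : Law Ω) (Z : Ω → C) (f : C → Ω → ℝ) :
    (expect (ω.map Z) fun c ↦ expect (cond ω Z c) (f c)) = expect ω fun a ↦ f (Z a) a := by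
  classical
  calc (expect (ω.map Z) fun c ↦ expect (cond ω Z c) (f c))
      = ∑ c ∈ (ω.map Z).weights.support, expect ω fun a ↦ if Z a = c then f c a else 0 :=
        Finset.sum_congr rfl fun c _ ↦ weights_map_mul_expect_cond ω Z c (f c)
    _ = expect ω fun a ↦ ∑ c ∈ (ω.map Z).weights.support, if Z a = c then f c a else 0 := by
        simp only [expect, Finsupp.sum, Finset.mul_sum]
        exact Finset.sum_comm
    _ = expect ω fun a ↦ f (Z a) a := expect_congr fun a ha ↦ by
        rw [Finset.sum_ite_eq, if_pos]
        exact Finsupp.mem_support_iff.2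
          ((weights_pos ha).trans_le (weights_le_weights_map ω Z a)).ne'

lemma joint_map_cond (ω : Law Ω) (Z : Ω → C) (X : Ω → A) :
    (joint (ω.map Z) fun c ↦ (cond ω Z c).map X) = ω.map fun a ↦ (Z a, X a) :=
  ext_expect fun f ↦ by simp [expect_map_expect_cond ω Z fun c a ↦ f (c, X a)]

lemma entropy_eq_expect (p : Law A) : H[p] = expect p fun a ↦ -log (p.weights a) :=
  Finset.sum_congr rfl fun _ _ ↦ neg_mul_comm _ _

lemma entropy_eq_sum [Fintype A] (p : Law A) : H[p] = ∑ a, negMulLog (p.weights a) :=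
  Finsupp.sum_fintype _ _ fun _ ↦ negMulLog_zero

lemma entropy_nonneg (p : Law A) : 0 ≤ H[p] :=
  Finset.sum_nonneg fun a _ ↦ negMulLog_nonneg (p.weights_nonneg a) (weights_le_one p a)

@[simp] lemma entropy_single (a : A) : H[(.single a : Law A)] = 0 := by
  simp [entropy]

lemma eq_of_weights_le {p q : Law A} (h : ∀ a, p.weights a ≤ q.weights a) : p = q := by
  classical
  have hp : ∑ a ∈ p.weights.support ∪ q.weights.support, p.weights a = 1 := by
    rw [← p.total, Finsupp.sum_of_support_subset _ Finset.subset_union_left _ fun _ _ ↦ rfl]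
  have hq : ∑ a ∈ p.weights.support ∪ q.weights.support, q.weights a = 1 := by
    rw [← q.total, Finsupp.sum_of_support_subset _ Finset.subset_union_right _ fun _ _ ↦ rfl]
  ext a
  by_cases ha : a ∈ p.weights.support ∪ q.weights.support
  · exact (Finset.sum_eq_sum_iff_of_le fun a _ ↦ h a).1 (hp.trans hq.symm) a ha
  · simp_all

lemma expect_div_weights_le_one (p q : Law A) :
    (expect p fun a ↦ q.weights a / p.weights a) ≤ 1 := by
  classical
  calc (expect p fun a ↦ q.weights a / p.weights a)
      = ∑ a ∈ p.weights.support, q.weights a :=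
        Finset.sum_congr rfl fun a ha ↦ mul_div_cancel₀ _ (Finsupp.mem_support_iff.1 ha)
    _ ≤ ∑ a ∈ p.weights.support ∪ q.weights.support, q.weights a :=
        Finset.sum_le_sum_of_subset_of_nonneg Finset.subset_union_left
          fun a _ _ ↦ q.weights_nonneg a
    _ = 1 := by
        rw [← q.total, Finsupp.sum_of_support_subset _ Finset.subset_union_right _ fun _ _ ↦ rfl]

lemma expect_neg_log_add_div_le (p q : Law A) :
    (expect p fun a ↦ -log (q.weights a) + (q.weights a / p.weights a - 1)) ≤
      expect p fun a ↦ -log (q.weights a) := by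
  rw [expect_add, expect_sub, expect_const]
  linarith [expect_div_weights_le_one p q]

lemma neg_log_le_neg_log_add_div_sub_one {x y : ℝ} (hx : 0 < x) (hy : 0 < y) :
    -log x ≤ -log y + (y / x - 1) := by
  have h := log_le_sub_one_of_pos (div_pos hy hx)
  rw [log_div hy.ne' hx.ne'] at h
  linarith

lemma neg_log_lt_neg_log_add_div_sub_one {x y : ℝ} (hx : 0 < x) (hy : 0 < y) (hne : y ≠ x) :
    -log x < -log y + (y / x - 1) := by
  have h := log_lt_sub_one_of_pos (div_pos hy hx) (mt (div_eq_one_iff_eq hx.ne').1 hne)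
  rw [log_div hy.ne' hx.ne'] at h
  linarith

lemma entropy_le_expect_neg_log {p q : Law A} (h : ∀ a, p.weights a ≠ 0 → q.weights a ≠ 0) :
    H[p] ≤ expect p fun a ↦ -log (q.weights a) := by
  rw [entropy_eq_expect]
  exact (expect_mono_of_ne_zero fun a ha ↦ neg_log_le_neg_log_add_div_sub_one (weights_pos ha)
    (weights_pos (h a ha))).trans (expect_neg_log_add_div_le p q)

lemma eq_of_expect_neg_log_le_entropy {p q : Law A}
    (h : ∀ a, p.weights a ≠ 0 → q.weights a ≠ 0)
    (hle : (expect p fun a ↦ -log (q.weights a)) ≤ H[p]) : p = q := by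
  by_contra hpq
  obtain ⟨a, ha, hne⟩ : ∃ a, p.weights a ≠ 0 ∧ q.weights a ≠ p.weights a := by
    by_contra! hall
    refine hpq (eq_of_weights_le fun a ↦ ?_)
    by_cases ha : p.weights a = 0
    · exact ha.trans_le (q.weights_nonneg a)
    · exact (hall a ha).ge
  rw [entropy_eq_expect] at hle
  exact hle.not_gt ((expect_lt_expect (fun b hb ↦ neg_log_le_neg_log_add_div_sub_one
    (weights_pos hb) (weights_pos (h b hb))) ha (neg_log_lt_neg_log_add_div_sub_one
    (weights_pos ha) (weights_pos (h a ha)) hne)).trans_le (expect_neg_log_add_div_le p q))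

lemma entropy_map_le (p : Law A) (f : A → B) : H[p.map f] ≤ H[p] := by
  rw [entropy_eq_expect, entropy_eq_expect, expect_map]
  exact expect_mono_of_ne_zero fun a ha ↦
    neg_le_neg (log_le_log (weights_pos ha) (weights_le_weights_map p f a))

lemma entropy_map_le_of_factorsThrough (p : Law A) {f : A → B} {g : A → C}
    (h : f.FactorsThrough g) : H[p.map f] ≤ H[p.map g] := by
  obtain ⟨a⟩ := p.nonempty
  have hf : f = extend g f (fun _ ↦ f a) ∘ g := (h.extend_comp _).symm
  rw [hf, StdSimplex.map_comp]
  exact entropy_map_le _ _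

lemma entropy_map_congr (p : Law A) {f : A → B} {g : A → C} (h : ∀ a b, f a = f b ↔ g a = g b) :
    H[p.map f] = H[p.map g] :=
  le_antisymm (entropy_map_le_of_factorsThrough p fun a b ↦ (h a b).2)
    (entropy_map_le_of_factorsThrough p fun a b ↦ (h a b).1)

lemma entropy_map_of_injective (p : Law A) {f : A → B} (hf : Injective f) : H[p.map f] = H[p] := by
  simpa using entropy_map_congr p (g := id) fun a b ↦ hf.eq_iff

lemma entropy_joint (P : Law I) (κ : I → Law A) :
    H[joint P κ] = H[P] + expect P fun i ↦ H[κ i] := by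
  rw [entropy_eq_expect, entropy_eq_expect P, expect_joint, ← expect_add]
  refine expect_congr fun i hi ↦ ?_
  rw [entropy_eq_expect, ← expect_const (κ i) (-log (P.weights i)), ← expect_add]
  refine expect_congr fun a ha ↦ ?_
  rw [weights_joint, log_mul hi ha, neg_add]

lemma entropy_prod (p : Law A) (q : Law B) : H[prod p q] = H[p] + H[q] := by
  rw [prod, entropy_joint, expect_const]

lemma expect_entropy_le (P : Law I) (κ : I → Law A) :
    (expect P fun i ↦ H[κ i]) ≤ H[iConvexComb P κ] := by
  rw [entropy_eq_expect (iConvexComb P κ), expect_iConvexComb]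
  refine expect_mono_of_ne_zero fun i hi ↦ entropy_le_expect_neg_log fun a ha ↦ ?_
  exact ((mul_pos (weights_pos hi) (weights_pos ha)).trans_le
    (mul_weights_le_weights_iConvexComb P κ i a)).ne'

lemma eq_iConvexComb_of_entropy_le {P : Law I} {κ : I → Law A}
    (h : H[iConvexComb P κ] ≤ expect P fun i ↦ H[κ i]) {i : I} (hi : P.weights i ≠ 0) :
    κ i = iConvexComb P κ := by
  have hsupp {j : I} (hj : P.weights j ≠ 0) (a : A) (ha : (κ j).weights a ≠ 0) :
      (iConvexComb P κ).weights a ≠ 0 := ((mul_pos (weights_pos hj) (weights_pos ha)).trans_le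
    (mul_weights_le_weights_iConvexComb P κ j a)).ne'
  refine eq_of_expect_neg_log_le_entropy (hsupp hi) (le_of_not_gt fun hlt ↦ h.not_gt ?_)
  rw [entropy_eq_expect (iConvexComb P κ), expect_iConvexComb]
  exact expect_lt_expect (fun j hj ↦ entropy_le_expect_neg_log (hsupp hj)) hi hlt

lemma entropy_map_pair (ω : Law Ω) (Z : Ω → C) (X : Ω → A) :
    H[ω.map fun a ↦ (Z a, X a)] =
      H[ω.map Z] + expect (ω.map Z) fun c ↦ H[(cond ω Z c).map X] := by
  rw [← joint_map_cond, entropy_joint]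

lemma entropy_le_add (ω : Law Ω) (X : Ω → A) (Y : Ω → B) :
    H[ω.map fun a ↦ (X a, Y a)] ≤ H[ω.map X] + H[ω.map Y] := by
  rw [entropy_map_pair]
  refine add_le_add_right ((expect_entropy_le _ _).trans_eq ?_) _
  rw [← map_snd_joint, joint_map_cond, StdSimplex.map_map]

lemma entropy_submodular (ω : Law Ω) {X : Ω → A} {Y : Ω → B} {Z : Ω → C}
    (hX : Z.FactorsThrough X) (hY : Z.FactorsThrough Y) :
    H[ω.map fun a ↦ (X a, Y a)] + H[ω.map Z] ≤ H[ω.map X] + H[ω.map Y] := by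
  have hXZ := entropy_map_congr ω (f := X) (g := fun a ↦ (Z a, X a)) fun a b ↦ by
    simpa using @hX a b
  have hYZ := entropy_map_congr ω (f := Y) (g := fun a ↦ (Z a, Y a)) fun a b ↦ by
    simpa using @hY a b
  have hXYZ := entropy_map_congr ω (f := fun a ↦ (X a, Y a)) (g := fun a ↦ (Z a, X a, Y a))
    fun a b ↦ by simpa using fun h _ ↦ @hX a b h
  rw [hXZ, hYZ, hXYZ, entropy_map_pair, entropy_map_pair, entropy_map_pair]
  have hsub : (expect (ω.map Z) fun c ↦ H[(cond ω Z c).map fun a ↦ (X a, Y a)]) ≤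
      (expect (ω.map Z) fun c ↦ H[(cond ω Z c).map X]) +
        expect (ω.map Z) fun c ↦ H[(cond ω Z c).map Y] := by
    rw [← expect_add]
    exact expect_mono fun c ↦ entropy_le_add _ X Y
  linarith

lemma entropy_submodular_pair (ω : Law Ω) (X : Ω → A) (Y : Ω → B) (Z : Ω → C) :
    H[ω.map fun a ↦ (X a, Y a, Z a)] + H[ω.map Z] ≤
      H[ω.map fun a ↦ (X a, Z a)] + H[ω.map fun a ↦ (Y a, Z a)] := by
  have h := entropy_submodular ω (X := fun a ↦ (X a, Z a)) (Y := fun a ↦ (Y a, Z a)) (Z := Z)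
    (fun _ _ h ↦ congrArg Prod.snd h) (fun _ _ h ↦ congrArg Prod.snd h)
  rwa [entropy_map_congr ω (g := fun a ↦ (X a, Y a, Z a)) fun a b ↦ by
    simp only [Prod.mk.injEq]; tauto] at h

/-- Concavity of the conditional entropy `H[X | f X]` in the law of `X`. -/
lemma expect_entropy_sub_entropy_map_le (P : Law I) (κ : I → Law A) (f : A → B) :
    (expect P fun i ↦ H[κ i] - H[(κ i).map f]) ≤
      H[iConvexComb P κ] - H[(iConvexComb P κ).map f] := by
  have hsub := entropy_submodular (joint P κ) (X := fun z ↦ (z.1, f z.2)) (Y := Prod.snd)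
    (Z := fun z ↦ f z.2) (fun _ _ h ↦ congrArg Prod.snd h) (fun _ _ h ↦ congrArg f h)
  have hpair : H[(joint P κ).map fun z ↦ ((z.1, f z.2), z.2)] = H[P] + expect P fun i ↦ H[κ i] := by
    rw [entropy_map_of_injective _ fun z w h ↦ ?_, entropy_joint]
    simp only [Prod.mk.injEq] at h
    exact Prod.ext h.1.1 h.2
  rw [hpair, map_joint_mk P κ fun _ ↦ f, entropy_joint, map_snd_joint,
    ← StdSimplex.map_map _ Prod.snd f, map_snd_joint] at hsub
  rw [expect_sub]
  linarith

section AddCommGroup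

variable {G G' : Type*} [AddCommGroup G] [AddCommGroup G']

/-- Laws on an abelian group form a commutative monoid under convolution: `p + q` is the law of
`X + Y` for independent `X ∼ p` and `Y ∼ q`. -/
instance : Add (Law G) := ⟨fun p q ↦ iConvexComb p fun x ↦ q.map (x + ·)⟩

instance : Zero (Law G) := ⟨.single 0⟩

lemma zero_def : (0 : Law G) = .single 0 := rfl

lemma add_def (p q : Law G) : p + q = iConvexComb p fun x ↦ q.map (x + ·) := rfl

@[simp] lemma expect_law_add (p q : Law G) (f : G → ℝ) :
    expect (p + q) f = expect p fun x ↦ expect q fun y ↦ f (x + y) := by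
  simp [add_def]

instance : AddCommMonoid (Law G) where
  add_assoc p q r := ext_expect fun f ↦ by simp [add_assoc]
  zero_add p := ext_expect fun f ↦ by simp [zero_def]
  add_zero p := ext_expect fun f ↦ by simp [zero_def]
  add_comm p q := ext_expect fun f ↦ by
    rw [expect_law_add, expect_law_add, expect_comm]
    simp only [add_comm]
  nsmul := nsmulRec

lemma map_law_add {F : Type*} [FunLike F G G'] [AddMonoidHomClass F G G'] (φ : F) (p q : Law G) :
    (p + q).map φ = p.map φ + q.map φ :=
  ext_expect fun f ↦ by simp

lemma map_add_eq_single_add (x : G) (p : Law G) : p.map (x + ·) = .single x + p :=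
  ext_expect fun f ↦ by simp

lemma entropy_single_add (x : G) (p : Law G) : H[.single x + p] = H[p] := by
  rw [← map_add_eq_single_add, entropy_map_of_injective _ (add_right_injective x)]

lemma single_add_single (x y : G) : (.single x + .single y : Law G) = .single (x + y) :=
  ext_expect fun f ↦ by simp

lemma single_add_single_add (x y : G) (p : Law G) :
    .single x + (.single y + p) = .single (x + y) + p := by
  rw [← add_assoc, single_add_single]

lemma single_zero_add (p : Law G) : .single 0 + p = p := zero_add p

lemma map_prod_add (p q : Law G) : ((prod p q).map fun z ↦ z.1 + z.2) = p + q :=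
  ext_expect fun f ↦ by simp

lemma iConvexComb_law_add (P : Law I) (κ : I → Law G) (q : Law G) :
    (iConvexComb P fun i ↦ κ i + q) = iConvexComb P κ + q :=
  ext_expect fun f ↦ by simp

lemma expect_entropy_add_le (P : Law I) (κ : I → Law G) (q : Law G) :
    (expect P fun i ↦ H[κ i + q]) ≤ H[iConvexComb P κ + q] := by
  rw [← iConvexComb_law_add]
  exact expect_entropy_le P _

lemma entropy_le_entropy_add_left (p q : Law G) : H[q] ≤ H[p + q] := by
  rw [add_def]
  refine le_of_eq_of_le ?_ (expect_entropy_le p _)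
  simp only [map_add_eq_single_add, entropy_single_add, expect_const]

lemma entropy_le_entropy_add_right (p q : Law G) : H[p] ≤ H[p + q] :=
  add_comm q p ▸ entropy_le_entropy_add_left q p

lemma entropy_add_le (p q : Law G) : H[p + q] ≤ H[p] + H[q] := by
  rw [← entropy_prod, ← map_prod_add]
  exact entropy_map_le _ _

/-- The doubling mass `s[X ; Y]` of independent `X ∼ p` and `Y ∼ q`. -/
def doublingMass (p q : Law G) : ℝ := H[p] + H[q] - H[p + q]

lemma doublingMass_comm (p q : Law G) : doublingMass p q = doublingMass q p := by
  rw [doublingMass, doublingMass, add_comm H[p], add_comm p]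

lemma doublingMass_le_right (p q : Law G) : doublingMass p q ≤ H[q] := by
  linarith [entropy_le_entropy_add_right p q, doublingMass.eq_def p q]

/-- The Kaimanovich–Vershik inequality. -/
lemma entropy_add_add_add_le (p q r : Law G) : H[p + q + r] + H[q] ≤ H[p + q] + H[q + r] := by
  have h := expect_entropy_sub_entropy_map_le p
    (fun x ↦ (prod q r).map fun z ↦ (x + z.1, z.2)) fun z ↦ z.1 + z.2
  have hmix : (iConvexComb p fun x ↦ (prod q r).map fun z ↦ (x + z.1, z.2)) = prod (p + q) r :=
    ext_expect fun f ↦ by simp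
  have hfib (x : G) : H[(prod q r).map fun z ↦ (x + z.1, z.2)] = H[q] + H[r] := by
    rw [entropy_map_of_injective _ fun z w hzw ↦ ?_, entropy_prod]
    simpa [Prod.ext_iff] using hzw
  have hsum (x : G) : H[((prod q r).map fun z ↦ (x + z.1, z.2)).map fun z ↦ z.1 + z.2]
      = H[q + r] := by
    rw [← entropy_single_add x (q + r)]
    exact congrArg entropy (ext_expect fun f ↦ by simp [add_assoc])
  simp only [hmix, hfib, hsum, expect_const, entropy_prod, map_prod_add] at h
  linarith

lemma entropy_add_self_add_le (p q : Law G) : H[p + p] + H[q] ≤ 2 * H[p + q] := by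
  have hadd := entropy_add_add_add_le p q p
  have hle := entropy_le_entropy_add_left q (p + p)
  rw [add_comm q p] at hadd
  rw [add_left_comm, ← add_assoc] at hle
  linarith

/-- The law of `X` given `X + Y = s`, for independent `X ∼ p` and `Y ∼ q`. -/
def fibre (p q : Law G) (s : G) : Law G :=
  (cond (prod p q) (fun z ↦ z.1 + z.2) s).map Prod.fst

lemma expect_expect_fibre (p q : Law G) (f : G → G → ℝ) :
    (expect (p + q) fun s ↦ expect (fibre p q s) (f s)) =
      expect p fun x ↦ expect q fun y ↦ f (x + y) x := by
  have h := expect_map_expect_cond (prod p q) (fun z ↦ z.1 + z.2) fun s z ↦ f s z.1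
  simpa [fibre, map_prod_add] using h

lemma iConvexComb_fibre (p q : Law G) : iConvexComb (p + q) (fibre p q) = p :=
  ext_expect fun f ↦ by rw [expect_iConvexComb, expect_expect_fibre p q fun _ ↦ f]; simp

lemma joint_fibre (p q : Law G) :
    joint (p + q) (fibre p q) = (prod p q).map fun z ↦ (z.1 + z.2, z.1) :=
  ext_expect fun f ↦ by
    rw [expect_joint, expect_expect_fibre p q fun s x ↦ f (s, x), expect_map, expect_prod]

lemma expect_entropy_fibre (p q : Law G) :
    (expect (p + q) fun s ↦ H[fibre p q s]) = doublingMass p q := by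
  rw [doublingMass, ← entropy_prod,
    ← entropy_map_of_injective (prod p q) (f := fun z ↦ (z.1 + z.2, z.1)), ← joint_fibre,
    entropy_joint, add_sub_cancel_left]
  intro z w h
  simp only [Prod.mk.injEq] at h
  exact Prod.ext h.2 (by simpa [h.2] using h.1)

lemma expect_entropy_fibre_add_le (p q r : Law G) :
    (expect (p + q) fun s ↦ H[fibre p q s + r]) ≤ H[p + r] := by
  simpa only [iConvexComb_fibre] using expect_entropy_add_le (p + q) (fibre p q) r

/-- The conditional entropy of `X₁ + X₃` given `X₁ + X₂` and `X₃ + X₄`, for independent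
`Xᵢ ∼ pᵢ`. -/
def fibreSumEntropy (p₁ p₂ p₃ p₄ : Law G) : ℝ :=
  expect (p₁ + p₂) fun s ↦ expect (p₃ + p₄) fun t ↦ H[fibre p₁ p₂ s + fibre p₃ p₄ t]

/-- The law of four independent variables. -/
def prodFour (p₁ p₂ p₃ p₄ : Law G) : Law ((G × G) × (G × G)) := prod (prod p₁ p₂) (prod p₃ p₄)

lemma joint_fibre_add_fibre (p₁ p₂ p₃ p₄ : Law G) :
    (joint (prod (p₁ + p₂) (p₃ + p₄)) fun u ↦ fibre p₁ p₂ u.1 + fibre p₃ p₄ u.2) =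
      (prodFour p₁ p₂ p₃ p₄).map fun x ↦
        ((x.1.1 + x.1.2, x.2.1 + x.2.2), x.1.1 + x.2.1) := by
  refine ext_expect fun f ↦ ?_
  rw [expect_joint, expect_prod]
  calc _ = expect (p₁ + p₂) fun s ↦ expect (fibre p₁ p₂ s) fun x ↦
          expect (p₃ + p₄) fun t ↦ expect (fibre p₃ p₄ t) fun y ↦ f ((s, t), x + y) := by
        simp only [expect_law_add (fibre _ _ _)]
        simp only [expect_comm (p₃ + p₄)]
    _ = _ := by
        rw [expect_expect_fibre p₁ p₂ fun s x ↦ expect (p₃ + p₄) fun t ↦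
          expect (fibre p₃ p₄ t) fun y ↦ f ((s, t), x + y)]
        simp only [expect_expect_fibre p₃ p₄ fun t y ↦ f ((_, t), _ + y), prodFour, expect_map,
          expect_prod]

lemma entropy_map_prodFour (p₁ p₂ p₃ p₄ : Law G) :
    H[(prodFour p₁ p₂ p₃ p₄).map fun x ↦ ((x.1.1 + x.1.2, x.2.1 + x.2.2), x.1.1 + x.2.1)] =
      H[p₁ + p₂] + H[p₃ + p₄] + fibreSumEntropy p₁ p₂ p₃ p₄ := by
  rw [← joint_fibre_add_fibre, entropy_joint, entropy_prod, expect_prod, fibreSumEntropy]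

lemma entropy_map_prodFour_pairs (p₁ p₂ p₃ p₄ : Law G) :
    H[(prodFour p₁ p₂ p₃ p₄).map fun x ↦ (x.1.1 + x.2.1, x.1.2 + x.2.2)] =
      H[p₁ + p₃] + H[p₂ + p₄] := by
  rw [← entropy_prod]
  refine congrArg entropy (ext_expect fun f ↦ ?_)
  simp only [prodFour, expect_map, expect_prod, expect_law_add, expect_comm p₂ p₃]

lemma entropy_map_prodFour_total (p₁ p₂ p₃ p₄ : Law G) :
    H[(prodFour p₁ p₂ p₃ p₄).map fun x ↦ (x.1.1 + x.2.1, x.1.1 + x.1.2 + (x.2.1 + x.2.2))] =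
      H[p₁ + p₃] + H[p₂ + p₄] := by
  rw [← entropy_map_prodFour_pairs]
  refine entropy_map_congr _ fun x y ↦ ?_
  rw [Prod.mk.injEq, Prod.mk.injEq]
  refine and_congr_right fun h ↦ ?_
  rw [add_add_add_comm, add_add_add_comm y.1.1, h, add_right_inj]

/-- The fibring inequality for the homomorphism `(a, b) ↦ a + b`. -/
lemma fibreSumEntropy_add_entropy_le (p₁ p₂ p₃ p₄ : Law G) :
    fibreSumEntropy p₁ p₂ p₃ p₄ + H[p₁ + p₂ + (p₃ + p₄)] ≤ H[p₁ + p₃] + H[p₂ + p₄] := by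
  have hsub := entropy_submodular (prodFour p₁ p₂ p₃ p₄)
    (X := fun x ↦ (x.1.1 + x.2.1, x.1.1 + x.1.2 + (x.2.1 + x.2.2)))
    (Y := fun x ↦ (x.1.1 + x.1.2, x.2.1 + x.2.2))
    (Z := fun x ↦ x.1.1 + x.1.2 + (x.2.1 + x.2.2))
    (fun _ _ h ↦ congrArg Prod.snd h) (fun _ _ h ↦ congrArg (fun u ↦ u.1 + u.2) h)
  have hpair := entropy_map_congr (prodFour p₁ p₂ p₃ p₄)
    (f := fun x ↦ ((x.1.1 + x.2.1, x.1.1 + x.1.2 + (x.2.1 + x.2.2)), x.1.1 + x.1.2, x.2.1 + x.2.2))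
    (g := fun x ↦ ((x.1.1 + x.1.2, x.2.1 + x.2.2), x.1.1 + x.2.1)) fun x y ↦ by
      simp only [Prod.mk.injEq]
      exact ⟨fun h ↦ ⟨h.2, h.1.1⟩, fun h ↦ ⟨⟨h.2, by rw [h.1.1, h.1.2]⟩, h.1⟩⟩
  have hsums : (prodFour p₁ p₂ p₃ p₄).map (fun x ↦ (x.1.1 + x.1.2, x.2.1 + x.2.2)) =
      prod (p₁ + p₂) (p₃ + p₄) := ext_expect fun f ↦ by simp [prodFour]
  have htotal : (prodFour p₁ p₂ p₃ p₄).map (fun x ↦ x.1.1 + x.1.2 + (x.2.1 + x.2.2)) =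
      p₁ + p₂ + (p₃ + p₄) := ext_expect fun f ↦ by simp [prodFour]
  rw [hpair, entropy_map_prodFour, entropy_map_prodFour_total, hsums, entropy_prod, htotal] at hsub
  linarith

lemma entropy_submodular_sub (ω : Law Ω) {X₁ Y₁ X₂ Y₂ : Ω → G} (S : Ω → C)
    (h : ∀ a, X₁ a + Y₁ a = X₂ a + Y₂ a) :
    H[ω.map fun a ↦ (X₁ a, Y₁ a, X₂ a, S a)] + H[ω.map fun a ↦ (X₁ a - Y₂ a, S a)] +
        2 * H[ω.map S] ≤
      H[ω.map fun a ↦ (X₁ a, S a)] + H[ω.map fun a ↦ (Y₂ a, S a)] +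
        (H[ω.map fun a ↦ (X₂ a, S a)] + H[ω.map fun a ↦ (Y₁ a, S a)]) := by
  have hdiff (a : Ω) : X₁ a - Y₂ a = X₂ a - Y₁ a := by
    rw [sub_eq_sub_iff_add_eq_add, h]
  have hsub := entropy_submodular ω (X := fun a ↦ (X₁ a, Y₂ a, S a))
    (Y := fun a ↦ (X₂ a, Y₁ a, S a)) (Z := fun a ↦ (X₁ a - Y₂ a, S a))
    (fun a b hab ↦ by simp_all) (fun a b hab ↦ by simp_all)
  have hpair : H[ω.map fun a ↦ ((X₁ a, Y₂ a, S a), (X₂ a, Y₁ a, S a))] =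
      H[ω.map fun a ↦ (X₁ a, Y₁ a, X₂ a, S a)] := entropy_map_congr ω fun a b ↦ by
    have hY (a : Ω) : Y₂ a = X₁ a + Y₁ a - X₂ a := by rw [h, add_sub_cancel_left]
    simp only [Prod.mk.injEq, hY]
    exact ⟨fun hab ↦ ⟨hab.1.1, hab.2.2.1, hab.2.1, hab.1.2.2⟩, fun hab ↦
      ⟨⟨hab.1, by rw [hab.1, hab.2.1, hab.2.2.1], hab.2.2.2⟩, hab.2.2.1, hab.2.1, hab.2.2.2⟩⟩
  have hXY := entropy_submodular_pair ω X₁ Y₂ S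
  have hYX := entropy_submodular_pair ω X₂ Y₁ S
  linarith

/-- The entropic Balog–Szemerédi–Gowers inequality. Given `i`, let `X₁`, `X₂` be independent with
law `κ i` and put `Yⱼ = w i - Xⱼ`; then `X₁ + X₂` is a translate of `X₁ - Y₂ = X₂ - Y₁`. -/
lemma expect_entropy_add_self_sub_le (P : Law I) (κ : I → Law G) (w : I → G) (S : I → C)
    (hinj : Injective fun i ↦ (w i, S i)) :
    (expect P fun i ↦ H[κ i + κ i] - H[κ i]) ≤
      2 * (H[(joint P κ).map fun z ↦ (z.2, S z.1)] +
        H[(joint P κ).map fun z ↦ (w z.1 - z.2, S z.1)] + H[P]) -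
      3 * H[P.map S] - 3 * H[joint P κ] := by
  set Θ : Law (I × G × G) := joint P fun i ↦ prod (κ i) (κ i) with hΘ
  have hfst (f : I × G → G × C) : Θ.map (fun z ↦ f (z.1, z.2.1)) = (joint P κ).map f :=
    ext_expect fun g ↦ by simp [hΘ]
  have hsnd (f : I × G → G × C) : Θ.map (fun z ↦ f (z.1, z.2.2)) = (joint P κ).map f :=
    ext_expect fun g ↦ by simp [hΘ]
  have hS : Θ.map (fun z ↦ S z.1) = P.map S := ext_expect fun g ↦ by simp [hΘ]
  have hI : Θ.map Prod.fst = P := map_fst_joint _ _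
  have hcouple := entropy_submodular_sub Θ (X₁ := fun z ↦ z.2.1) (Y₁ := fun z ↦ w z.1 - z.2.1)
    (X₂ := fun z ↦ z.2.2) (Y₂ := fun z ↦ w z.1 - z.2.2) (fun z ↦ S z.1) fun z ↦ by simp
  have hΘent : H[Θ.map fun z ↦ (z.2.1, w z.1 - z.2.1, z.2.2, S z.1)] =
      H[P] + 2 * expect P fun i ↦ H[κ i] := by
    rw [entropy_map_of_injective, hΘ, entropy_joint, ← expect_const_mul]
    · simp only [entropy_prod, two_mul]
    · intro z z' h
      simp only [Prod.mk.injEq] at h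
      have hi : z.1 = z'.1 := hinj (Prod.ext (by simpa [h.1] using h.2.1) h.2.2.2)
      exact Prod.ext hi (Prod.ext h.1 h.2.2.1)
  have hdiff := entropy_submodular Θ (X := fun z ↦ (z.2.1 - (w z.1 - z.2.2), S z.1))
    (Y := Prod.fst) (Z := fun z ↦ S z.1)
    (fun _ _ h ↦ congrArg Prod.snd h) (fun _ _ h ↦ congrArg S h)
  have hdiffent : H[Θ.map fun z ↦ ((z.2.1 - (w z.1 - z.2.2), S z.1), z.1)] =
      H[P] + expect P fun i ↦ H[κ i + κ i] := by
    rw [← entropy_joint, ← entropy_map_of_injective (joint P _)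
      (f := fun z ↦ ((-w z.1 + z.2, S z.1), z.1)) fun z z' h ↦ ?_]
    · refine congrArg entropy (ext_expect fun g ↦ ?_)
      have hdiff (x y w : G) : x - (w - y) = -w + (x + y) := by abel
      simp only [hΘ, expect_map, expect_joint, expect_prod, expect_law_add, hdiff]
    · simp only [Prod.mk.injEq] at h
      exact Prod.ext h.2 (by simpa [h.2] using h.1.1)
  rw [hΘent, hS, hfst fun z ↦ (z.2, S z.1), hfst fun z ↦ (w z.1 - z.2, S z.1),
    hsnd fun z ↦ (z.2, S z.1), hsnd fun z ↦ (w z.1 - z.2, S z.1)] at hcouple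
  rw [hdiffent, hS, hI] at hdiff
  rw [entropy_joint, expect_sub]
  linarith

lemma entropy_sub_entropy_add_le {F : Type*} [FunLike F G G'] [AddMonoidHomClass F G G'] (φ : F)
    (p q : Law G) : H[q] - H[p + q] ≤ H[q.map φ] - H[p.map φ + q.map φ] := by
  have h := expect_entropy_sub_entropy_map_le p (fun x ↦ q.map (x + ·)) φ
  simp only [map_add_eq_single_add, map_law_add, entropy_single_add, StdSimplex.map_single,
    expect_const] at h
  simp only [← map_law_add, ← map_add_eq_single_add, ← add_def] at h ⊢
  linarith

lemma doublingMass_le_add_doublingMass_map {F : Type*} [FunLike F G G'] [AddMonoidHomClass F G G']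
    (φ : F) (p q : Law G) :
    doublingMass p q ≤ H[p] - H[p.map φ] + doublingMass (p.map φ) (q.map φ) := by
  linarith [entropy_sub_entropy_add_le φ p q, doublingMass.eq_def p q,
    doublingMass.eq_def (p.map φ) (q.map φ)]

lemma doublingMass_le_doublingMass_add (p q r : Law G) :
    doublingMass p q ≤ doublingMass p (q + r) := by
  linarith [entropy_add_add_add_le p q r, doublingMass.eq_def p q, doublingMass.eq_def p (q + r),
    congrArg entropy (add_assoc p q r)]

lemma expect_expect_doublingMass (P : Law I) (κ : I → Law G) (Q : Law J) (κ' : J → Law G) :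
    (expect P fun i ↦ expect Q fun j ↦ doublingMass (κ i) (κ' j)) =
      (expect P fun i ↦ H[κ i]) + (expect Q fun j ↦ H[κ' j]) -
        expect P fun i ↦ expect Q fun j ↦ H[κ i + κ' j] := by
  simp only [doublingMass, expect_sub, expect_add, expect_const]

lemma expect_expect_doublingMass_fibre (p₁ p₂ p₃ p₄ : Law G) :
    (expect (p₁ + p₂) fun s ↦ expect (p₃ + p₄) fun t ↦
      doublingMass (fibre p₁ p₂ s) (fibre p₃ p₄ t)) =
      doublingMass p₁ p₂ + doublingMass p₃ p₄ - fibreSumEntropy p₁ p₂ p₃ p₄ := by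
  rw [expect_expect_doublingMass, expect_entropy_fibre, expect_entropy_fibre, fibreSumEntropy]

section CharTwo

variable [Module (ZMod 2) G]

/-- Both sides are the joint entropy of all sums `Xᵢ + Xⱼ`. -/
lemma fibreSumEntropy_add_entropy_comm (p₁ p₂ p₃ p₄ : Law G) :
    H[p₁ + p₂] + H[p₃ + p₄] + fibreSumEntropy p₁ p₂ p₃ p₄ =
      H[p₁ + p₃] + H[p₄ + p₂] + fibreSumEntropy p₁ p₃ p₄ p₂ := by
  have hreorder : (prodFour p₁ p₃ p₄ p₂).map (fun x ↦ ((x.1.1, x.2.2), (x.1.2, x.2.1))) =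
      prodFour p₁ p₂ p₃ p₄ := ext_expect fun f ↦ by
    simp only [prodFour, expect_map, expect_prod, expect_comm p₄ p₂, expect_comm p₃ p₂]
  let e : (G × G) × G → (G × G) × G := fun u ↦
    ((u.2, u.1.1 + u.1.2 + u.2), u.1.2 + u.2)
  have he : Injective e := fun u v h ↦ by
    simp only [e, Prod.mk.injEq] at h
    obtain ⟨⟨h₃, h₁⟩, h₂⟩ := h
    rw [h₃, add_left_inj] at h₁ h₂
    exact Prod.ext (Prod.ext (by simpa [h₂] using h₁) h₂) h₃
  rw [← entropy_map_prodFour, ← entropy_map_prodFour, ← hreorder, StdSimplex.map_map,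
    ← entropy_map_of_injective _ he, StdSimplex.map_map]
  refine congrArg (fun f ↦ H[(prodFour _ _ _ _).map f]) (funext fun x ↦ ?_)
  simp only [e, Prod.mk.injEq]
  refine ⟨⟨trivial, ?_⟩, ?_⟩
  · linear_combination (norm := abel) ZModModule.add_self x.1.1 + ZModModule.add_self x.1.2
  · linear_combination (norm := abel) ZModModule.add_self x.1.2

lemma expect_fibre_entropy_add_self_sub_le (p₁ p₂ p₃ p₄ : Law G) :
    (expect (p₁ + p₂) fun s ↦ expect (p₃ + p₄) fun t ↦
      H[fibre p₁ p₂ s + fibre p₃ p₄ t + (fibre p₁ p₂ s + fibre p₃ p₄ t)] -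
        H[fibre p₁ p₂ s + fibre p₃ p₄ t]) ≤
      2 * (H[p₁ + p₃] + H[p₂ + p₄] + H[p₁ + p₄] + H[p₂ + p₃]) - H[p₁ + p₂] - H[p₃ + p₄] -
        3 * H[p₁ + p₂ + (p₃ + p₄)] - 3 * fibreSumEntropy p₁ p₂ p₃ p₄ := by
  have hbsg := expect_entropy_add_self_sub_le (prod (p₁ + p₂) (p₃ + p₄))
    (fun u ↦ fibre p₁ p₂ u.1 + fibre p₃ p₄ u.2) (fun u ↦ u.2) (fun u ↦ u.1 + u.2)
    fun u v h ↦ by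
      simp only [Prod.mk.injEq] at h
      exact Prod.ext (by simpa [h.1] using h.2) h.1
  have hswap : H[(prodFour p₁ p₂ p₃ p₄).map fun x ↦
      (x.2.1 + x.2.2 - (x.1.1 + x.2.1), x.1.1 + x.1.2 + (x.2.1 + x.2.2))] =
      H[p₁ + p₄] + H[p₂ + p₃] := by
    have hreorder : (prodFour p₁ p₂ p₃ p₄).map (fun x ↦ (x.1, x.2.swap)) =
        prodFour p₁ p₂ p₄ p₃ := ext_expect fun f ↦ by simp [prodFour, expect_comm p₃ p₄]
    rw [← entropy_map_prodFour_total, ← hreorder, StdSimplex.map_map]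
    refine congrArg (fun f ↦ H[(prodFour _ _ _ _).map f]) (funext fun x ↦ ?_)
    simp only [Prod.mk.injEq, Prod.fst_swap, Prod.snd_swap]
    constructor
    · linear_combination (norm := abel) -ZModModule.add_self x.1.1
    · abel
  rw [joint_fibre_add_fibre, StdSimplex.map_map, StdSimplex.map_map, entropy_map_prodFour_total,
    hswap, entropy_map_prodFour, map_prod_add, entropy_prod, expect_prod] at hbsg
  linarith

lemma entropy_map_bot_mkQ (p : Law G) : H[p.map (⊥ : Submodule (ZMod 2) G).mkQ] = H[p] :=
  entropy_map_of_injective p (LinearMap.ker_eq_bot.1 (Submodule.ker_mkQ ⊥))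

lemma entropy_map_comap_mkQ (p : Law G) (V : Submodule (ZMod 2) G)
    (V' : Submodule (ZMod 2) (G ⧸ V)) :
    H[p.map (V'.comap V.mkQ).mkQ] = H[(p.map V.mkQ).map V'.mkQ] := by
  rw [StdSimplex.map_map]
  refine entropy_map_congr p fun x y ↦ ?_
  simp only [Submodule.mkQ_apply, Submodule.Quotient.eq, Submodule.mem_comap,
    Submodule.Quotient.mk_sub]

instance [Finite G] (V : Submodule (ZMod 2) G) : Finite (G ⧸ V) := Quotient.finite _

lemma card_comap_mkQ [Finite G] (V : Submodule (ZMod 2) G) (V' : Submodule (ZMod 2) (G ⧸ V)) :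
    Nat.card (V'.comap V.mkQ) = Nat.card V * Nat.card V' := by
  have hV : Nat.card V * V.toAddSubgroup.index = Nat.card G := V.toAddSubgroup.card_mul_index
  have hV' : Nat.card V' * V'.toAddSubgroup.index = V.toAddSubgroup.index :=
    V'.toAddSubgroup.card_mul_index
  have hcomap : Nat.card (V'.comap V.mkQ) * V'.toAddSubgroup.index = Nat.card G := by
    rw [← V'.toAddSubgroup.index_comap_of_surjective (f := V.mkQ.toAddMonoidHom)
      V.mkQ_surjective]
    exact (V'.comap V.mkQ).toAddSubgroup.card_mul_index
  rw [← hV, ← hV', ← mul_assoc] at hcomap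
  exact Nat.eq_of_mul_eq_mul_right (Nat.pos_of_ne_zero AddSubgroup.FiniteIndex.index_ne_zero) hcomap

/-- A law is `l`-reduced if quotienting by any subspace `V` costs at most `l log |V|` of entropy. -/
def IsReduced (l : ℝ) (p : Law G) : Prop :=
  ∀ V : Submodule (ZMod 2) G, H[p] - H[p.map V.mkQ] ≤ l * log (Nat.card V)

lemma IsReduced.mono {l l' : ℝ} {p : Law G} (hp : IsReduced l p) (h : l ≤ l') : IsReduced l' p :=
  fun V ↦ (hp V).trans (mul_le_mul_of_nonneg_right h (log_natCast_nonneg _))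

/-- The subspace is a maximal one whose quotient costs the family the stated amount of entropy. -/
lemma exists_isReduced [Finite G] {ι : Type*} [Fintype ι] (l : ℝ) (p : ι → Law G) :
    ∃ V : Submodule (ZMod 2) G,
      l * log (Nat.card V) ≤ ∑ i, H[p i] - ∑ i, H[(p i).map V.mkQ] ∧
        ∀ i, IsReduced l ((p i).map V.mkQ) := by
  obtain ⟨V, hV⟩ := ({V : Submodule (ZMod 2) G | l * log (Nat.card V) ≤
    ∑ i, H[p i] - ∑ i, H[(p i).map V.mkQ]}).toFinite.exists_maximal
    ⟨⊥, by simp [entropy_map_bot_mkQ]⟩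
  refine ⟨V, hV.prop, fun i V' ↦ ?_⟩
  by_contra! hi
  have hmem : l * log (Nat.card (V'.comap V.mkQ)) ≤
      ∑ i, H[p i] - ∑ i, H[(p i).map (V'.comap V.mkQ).mkQ] := by
    have hsum : H[(p i).map V.mkQ] - H[((p i).map V.mkQ).map V'.mkQ] ≤
        ∑ i, (H[(p i).map V.mkQ] - H[((p i).map V.mkQ).map V'.mkQ]) :=
      Finset.single_le_sum
        (f := fun j ↦ H[(p j).map V.mkQ] - H[((p j).map V.mkQ).map V'.mkQ])
        (fun j _ ↦ sub_nonneg.2 (entropy_map_le _ _)) (Finset.mem_univ i)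
    have hVprop : l * log (Nat.card V) ≤ ∑ i, H[p i] - ∑ i, H[(p i).map V.mkQ] := hV.prop
    rw [Finset.sum_sub_distrib] at hsum
    rw [card_comap_mkQ, Nat.cast_mul, log_mul (Nat.cast_ne_zero.2 Nat.card_pos.ne')
      (Nat.cast_ne_zero.2 Nat.card_pos.ne')]
    simp only [entropy_map_comap_mkQ]
    linarith
  have hle : V'.comap V.mkQ ≤ V := hV.le_of_ge hmem (Submodule.le_comap_mkQ V V')
  have hbot : V' = ⊥ := (Submodule.eq_bot_iff _).2 fun y hy ↦ by
    obtain ⟨x, rfl⟩ := V.mkQ_surjective y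
    exact (Submodule.Quotient.mk_eq_zero V).2 (hle hy)
  subst hbot
  simp [entropy_map_bot_mkQ] at hi

end CharTwo

end AddCommGroup

/-- An `l`-reduced law has doubling mass at most `η (H[X] + H[Y])` with any other law. -/
def ReducedDoublingBound (η l : ℝ) : Prop :=
  ∀ (G : Type) [AddCommGroup G] [Module (ZMod 2) G] [Finite G] (p q : Law G),
    IsReduced l p → doublingMass p q ≤ η * (H[p] + H[q])

lemma ReducedDoublingBound.mono {η η' l : ℝ} (hb : ReducedDoublingBound η l) (h : η ≤ η') :
    ReducedDoublingBound η' l := fun G _ _ _ p q hp ↦ (hb G p q hp).trans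
  (mul_le_mul_of_nonneg_right h (add_nonneg (entropy_nonneg p) (entropy_nonneg q)))

section Reduced

variable {G : Type} [AddCommGroup G] [Module (ZMod 2) G] [Finite G] {η ε l : ℝ}

lemma exists_expect_doublingMass_le (hε : 0 ≤ ε) {P : Law I} {κ : I → Law G}
    (hκ : IsReduced (ε * l) (iConvexComb P κ)) (q : Law G) :
    ∃ V : Submodule (ZMod 2) G, IsReduced l (q.map V.mkQ) ∧
      (expect P fun i ↦ doublingMass (κ i) q) ≤ ε * (H[q] - H[q.map V.mkQ]) +
        expect P fun i ↦ doublingMass ((κ i).map V.mkQ) (q.map V.mkQ) := by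
  obtain ⟨V, hcost, hred⟩ := exists_isReduced l fun _ : Unit ↦ q
  refine ⟨V, hred (), ?_⟩
  have hstep := expect_mono (p := P) fun i ↦ doublingMass_le_add_doublingMass_map V.mkQ (κ i) q
  have hκcost := (expect_entropy_sub_entropy_map_le P κ V.mkQ).trans (hκ V)
  have hε_cost := mul_le_mul_of_nonneg_left hcost hε
  simp only [expect_add, Finset.univ_unique, Finset.sum_singleton] at hstep hε_cost
  linarith

lemma expect_doublingMass_le (hη : 0 ≤ η) (hε : 0 ≤ ε) (hb : ReducedDoublingBound η l)
    {P : Law I} {κ : I → Law G} (hκ : IsReduced (ε * l) (iConvexComb P κ)) (q : Law G) :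
    (expect P fun i ↦ doublingMass (κ i) q) ≤ (η + ε) * ((expect P fun i ↦ H[κ i]) + H[q]) := by
  obtain ⟨V, hq, hle⟩ := exists_expect_doublingMass_le hε hκ q
  have hbV := expect_mono (p := P) fun i ↦ (doublingMass_comm _ _).trans_le
    ((hb _ (q.map V.mkQ) ((κ i).map V.mkQ) hq).trans (mul_le_mul_of_nonneg_left
      (add_le_add (entropy_map_le q V.mkQ) (entropy_map_le (κ i) V.mkQ)) hη))
  simp only [expect_const_mul, expect_add, expect_const] at hbV
  have hκ0 := expect_nonneg (p := P) fun i ↦ entropy_nonneg (κ i)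
  nlinarith [mul_nonneg hε (entropy_nonneg (q.map V.mkQ)), mul_nonneg hε hκ0]

lemma expect_expect_doublingMass_le (hη : 0 ≤ η) (hε : 0 ≤ ε) (hb : ReducedDoublingBound η l)
    {P : Law I} {κ : I → Law G} (hκ : IsReduced (ε * l) (iConvexComb P κ)) (Q : Law J)
    (κ' : J → Law G) :
    (expect P fun i ↦ expect Q fun j ↦ doublingMass (κ i) (κ' j)) ≤
      (η + ε) * ((expect P fun i ↦ H[κ i]) + expect Q fun j ↦ H[κ' j]) := by
  have h := expect_mono (p := Q) fun j ↦ expect_doublingMass_le hη hε hb hκ (κ' j)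
  rw [expect_comm]
  simpa only [expect_const_mul, expect_add, expect_const] using h

/-- If `q` nearly stabilises under doubling then it loses most of its entropy in some quotient, so
its doubling mass with a reduced mixture is small. -/
lemma expect_doublingMass_le_of_entropy_add_self (hη : η < 1 / 2) (hε : 0 ≤ ε)
    (hb : ReducedDoublingBound η l) {P : Law I} {κ : I → Law G}
    (hκ : IsReduced (ε * l) (iConvexComb P κ)) (q : Law G) :
    (expect P fun i ↦ doublingMass (κ i) q) ≤ ε * H[q] + (H[q + q] - H[q]) / (1 - 2 * η) := by
  obtain ⟨V, hq, hle⟩ := exists_expect_doublingMass_le hε hκ q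
  have htrivial := expect_mono (p := P) fun i ↦
    doublingMass_le_right ((κ i).map V.mkQ) (q.map V.mkQ)
  rw [expect_const] at htrivial
  have hself : H[q.map V.mkQ] ≤ (H[q + q] - H[q]) / (1 - 2 * η) := by
    rw [le_div_iff₀ (by linarith)]
    linarith [hb _ _ (q.map V.mkQ) hq, entropy_sub_entropy_add_le V.mkQ q q,
      doublingMass.eq_def (q.map V.mkQ) (q.map V.mkQ)]
  linarith [mul_nonneg hε (entropy_nonneg (q.map V.mkQ))]

lemma expect_expect_doublingMass_le_of_entropy_add_self (hη : η < 1 / 2) (hε : 0 ≤ ε)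
    (hb : ReducedDoublingBound η l) {P : Law I} {κ : I → Law G}
    (hκ : IsReduced (ε * l) (iConvexComb P κ)) (Q : Law J) (κ' : J → Law G) :
    (expect P fun i ↦ expect Q fun j ↦ doublingMass (κ i) (κ' j)) ≤
      ε * (expect Q fun j ↦ H[κ' j]) +
        (expect Q fun j ↦ H[κ' j + κ' j] - H[κ' j]) / (1 - 2 * η) := by
  have h := expect_mono (p := Q) fun j ↦ expect_doublingMass_le_of_entropy_add_self hη hε hb hκ
    (κ' j)
  rw [expect_comm]
  simpa only [div_eq_inv_mul, expect_const_mul, expect_add] using h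

lemma two_mul_doublingMass_le (hη : 0 ≤ η) (hε : 0 ≤ ε) (hb : ReducedDoublingBound η l)
    {p : Law G} (hp : IsReduced (ε * l) p) (q : Law G) :
    2 * (1 - (η + ε)) * doublingMass p q ≤ doublingMass (p + q) (p + q) := by
  have h := expect_expect_doublingMass_le hη hε hb (P := p + q) (κ := fibre p q)
    (by rwa [iConvexComb_fibre]) (q + p) (fibre q p)
  rw [expect_expect_doublingMass_fibre, expect_entropy_fibre, expect_entropy_fibre,
    doublingMass_comm q p] at h
  have hfibring := fibreSumEntropy_add_entropy_le p q q p
  rw [add_comm q p] at hfibring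
  linarith [doublingMass.eq_def p q, doublingMass.eq_def (p + q) (p + q)]

lemma two_mul_doublingMass_self_sub_le (hη : 0 ≤ η) (hε : 0 ≤ ε) (hb : ReducedDoublingBound η l)
    {p : Law G} (hp : IsReduced (ε * l) p) :
    2 * doublingMass p p - fibreSumEntropy p p p p ≤ 2 * (η + ε) * doublingMass p p := by
  have h := expect_expect_doublingMass_le hη hε hb (P := p + p) (κ := fibre p p)
    (by rwa [iConvexComb_fibre]) (p + p) (fibre p p)
  rw [expect_expect_doublingMass_fibre, expect_entropy_fibre] at h
  linarith [doublingMass.eq_def p p]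

lemma two_mul_doublingMass_self_sub_le_of_lt_half (hη : η < 1 / 2) (hε : 0 ≤ ε)
    (hb : ReducedDoublingBound η l) {p : Law G} (hp : IsReduced (ε * l) p) :
    2 * doublingMass p p - fibreSumEntropy p p p p ≤ ε * fibreSumEntropy p p p p +
      3 * (2 * H[p + p] - H[p + p + (p + p)] - fibreSumEntropy p p p p) / (1 - 2 * η) := by
  have hmono := expect_mono (p := p + p) fun s ↦ expect_mono (p := prod (p + p) (p + p)) fun u ↦
    doublingMass_le_doublingMass_add (fibre p p s) (fibre p p u.1) (fibre p p u.2)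
  simp only [expect_prod, expect_const] at hmono
  rw [expect_expect_doublingMass_fibre] at hmono
  have hbsg := expect_fibre_entropy_add_self_sub_le p p p p
  have hloss := expect_expect_doublingMass_le_of_entropy_add_self hη hε hb (P := p + p)
    (κ := fibre p p) (by rwa [iConvexComb_fibre]) (prod (p + p) (p + p))
    fun u ↦ fibre p p u.1 + fibre p p u.2
  simp only [expect_prod] at hloss
  rw [← fibreSumEntropy] at hloss
  have hdiv := div_le_div_of_nonneg_right hbsg (by linarith : 0 ≤ 1 - 2 * η)
  rw [show 2 * (H[p + p] + H[p + p] + H[p + p] + H[p + p]) - H[p + p] - H[p + p] -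
    3 * H[p + p + (p + p)] - 3 * fibreSumEntropy p p p p =
      3 * (2 * H[p + p] - H[p + p + (p + p)] - fibreSumEntropy p p p p) by ring] at hdiv
  linarith

end Reduced

/-- The gain of one step of the induction on the constant of `ReducedDoublingBound`. -/
def gain (η : ℝ) : ℝ := η ^ 2 * (1 - 2 * η) / 100

lemma gain_pos {η : ℝ} (h₀ : 0 < η) (h₁ : η < 1 / 2) : 0 < gain η := by
  have : 0 < 1 - 2 * η := by linarith
  unfold gain
  positivity

lemma gain_le_one_sub_div {η : ℝ} (h₀ : 0 < η) (h₁ : η < 1 / 2) :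
    gain η ≤ (1 - 2 * η) / 400 := by
  have hsq : η ^ 2 ≤ 1 / 4 := by nlinarith
  unfold gain
  nlinarith

lemma gain_le_sq_div {η : ℝ} (h₀ : 0 < η) : gain η ≤ η ^ 2 / 100 := by
  unfold gain
  nlinarith [pow_pos h₀ 3]

lemma two_mul_sub_gain_mul_le {η m t r : ℝ} (h₀ : 0 < η) (h₁ : η < 1 / 2) (ht : 0 ≤ t)
    (hm : (η - 2 * gain η) * (m + t) ≤ m) (hr : 2 * (1 - (η + gain η + gain η)) * m ≤ r) :
    2 * (η - 6 * gain η) * t ≤ r := by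
  have hpos := gain_pos h₀ h₁
  have hle := gain_le_one_sub_div h₀ h₁
  have hsq := gain_le_sq_div h₀
  set ε := gain η
  have hlower : (η - 6 * ε) * (1 - η + 2 * ε) ≤ (1 - η - 2 * ε) * (η - 2 * ε) := by nlinarith
  have hm' : (η - 2 * ε) * t ≤ (1 - η + 2 * ε) * m := by linarith
  have hscaled := mul_le_mul_of_nonneg_left hm' (by linarith : 0 ≤ 1 - η - 2 * ε)
  have hscaled' := mul_le_mul_of_nonneg_right hlower ht
  refine le_of_mul_le_mul_left ?_ (by linarith : 0 < 1 - η + 2 * ε)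
  nlinarith

/-- With `r`, `t₂`, `t₄` and `f` playing the roles of the doubling mass of `T`, of `H[2T]`, `H[4T]`
and the entropy of the sum of two fibres of `T + T`, these are the inequalities that a failure of
the induction step would produce. -/
lemma false_of_doublingMass_estimates {η t r t₂ t₄ f : ℝ} (h₀ : 0 < η) (h₁ : η < 1 / 2)
    (ht : 0 < t) (hr : r = 2 * t - t₂) (htt₂ : t ≤ t₂) (hrt : 2 * (η - 6 * gain η) * t ≤ r)
    (ht₄ : 2 * t₂ - t₄ ≤ 2 * (η + gain η) * t₂)
    (hf : 2 * r - f ≤ 2 * (η + gain η + gain η) * r) (hft₄ : f + t₄ ≤ 2 * t₂)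
    (hloss : 2 * r - f ≤ gain η * f + 3 * (2 * t₂ - t₄ - f) / (1 - 2 * (η + gain η))) : False := by
  have hpos := gain_pos h₀ h₁
  have hle := gain_le_one_sub_div h₀ h₁
  have hsq := gain_le_sq_div h₀
  have hgain : 100 * gain η = η ^ 2 * (1 - 2 * η) := by unfold gain; ring
  set ε := gain η
  have hεt := mul_pos hpos ht
  have hinfo : 2 * t₂ - t₄ - f ≤ 30 * ε * t := by nlinarith
  have hf_le : f ≤ 2 * t := by nlinarith
  have hlower : 4 * (η ^ 2 - 10 * ε) * t ≤ 2 * r - f := by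
    have hscaled := mul_le_mul_of_nonneg_left hrt (by linarith : 0 ≤ 1 + η + ε)
    have hslack := mul_nonneg hεt.le (by linarith : 0 ≤ 3 - 5 * η - 6 * ε)
    nlinarith
  have hupper : 3 * (2 * t₂ - t₄ - f) / (1 - 2 * (η + ε)) ≤ 1.8 * η ^ 2 * t := by
    rw [div_le_iff₀ (by linarith)]
    nlinarith
  nlinarith [mul_pos (pow_pos h₀ 2) ht]

section Reduced

variable {G : Type} [AddCommGroup G] [Module (ZMod 2) G] [Finite G] {η l : ℝ}

lemma doublingMass_le_of_isReduced (h₀ : 0 < η) (h₁ : η < 1 / 2) (hl : 0 ≤ l)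
    (hb : ReducedDoublingBound (η + gain η) l) {p q : Law G} (hp : IsReduced (gain η * l) p)
    (hpq : IsReduced (gain η * l) (p + q)) (hpq₂ : IsReduced (gain η * l) (p + q + (p + q))) :
    doublingMass p q ≤ (η - 2 * gain η) * (H[p] + H[q]) := by
  by_contra! hcon
  have hpos := gain_pos h₀ h₁
  have hle := gain_le_one_sub_div h₀ h₁
  have hmass : H[p] + H[q] = doublingMass p q + H[p + q] := by rw [doublingMass]; ring
  have hT : 0 < H[p + q] := by
    refine (entropy_nonneg _).lt_of_ne fun h ↦ ?_
    have hp0 : H[p] = 0 :=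
      le_antisymm ((entropy_le_entropy_add_right p q).trans_eq h.symm) (entropy_nonneg p)
    have hq0 : H[q] = 0 :=
      le_antisymm ((entropy_le_entropy_add_left p q).trans_eq h.symm) (entropy_nonneg q)
    simp [doublingMass, hp0, hq0, ← h] at hcon
  have hgap : 2 * (η - 6 * gain η) * H[p + q] ≤ doublingMass (p + q) (p + q) := by
    rw [hmass] at hcon
    exact two_mul_sub_gain_mul_le h₀ h₁ hT.le hcon.le
      (two_mul_doublingMass_le (by linarith) hpos.le hb hp q)
  have hT₄ := hb G _ (p + q + (p + q)) (hpq₂.mono (by nlinarith))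
  have hfibring := fibreSumEntropy_add_entropy_le (p + q) (p + q) (p + q) (p + q)
  exact false_of_doublingMass_estimates h₀ h₁ hT (by rw [doublingMass]; ring)
    (entropy_le_entropy_add_left (p + q) (p + q)) hgap
    (by rw [doublingMass] at hT₄; linarith)
    (two_mul_doublingMass_self_sub_le (by linarith) hpos.le hb hpq) (by linarith)
    (two_mul_doublingMass_self_sub_le_of_lt_half (by linarith) hpos.le hb hpq)

lemma ReducedDoublingBound.sub_gain (h₀ : 0 < η) (h₁ : η < 1 / 2) (hl : 0 < l)
    (hb : ReducedDoublingBound (η + gain η) l) :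
    ReducedDoublingBound (η - gain η) (gain η * (gain η * l) / 4) := by
  intro G _ _ _ p q hp
  obtain ⟨V, hcost, hred⟩ := exists_isReduced (gain η * l) ![p, p + q, p + q + (p + q)]
  have hpV := hred 0
  have hpqV := hred 1
  have hpqV₂ := hred 2
  simp only [Matrix.cons_val, map_law_add] at hpV hpqV hpqV₂
  have hmass := doublingMass_le_of_isReduced h₀ h₁ hl.le hb hpV hpqV hpqV₂
  have hquotient := doublingMass_le_add_doublingMass_map V.mkQ p q
  have hpcost := hp V
  have hsum : gain η * l * log (Nat.card V) ≤ 4 * (H[p] + H[q]) := by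
    simp only [Fin.sum_univ_three, Matrix.cons_val] at hcost
    linarith [entropy_add_le p q, entropy_add_le (p + q) (p + q), entropy_nonneg q,
      entropy_nonneg (p.map V.mkQ), entropy_nonneg ((p + q).map V.mkQ),
      entropy_nonneg ((p + q + (p + q)).map V.mkQ)]
  have hmap : (η - 2 * gain η) * (H[p.map V.mkQ] + H[q.map V.mkQ]) ≤
      (η - 2 * gain η) * (H[p] + H[q]) := mul_le_mul_of_nonneg_left
    (add_le_add (entropy_map_le p _) (entropy_map_le q _)) (by nlinarith [gain_le_sq_div h₀])
  linarith [mul_le_mul_of_nonneg_left hsum (gain_pos h₀ h₁).le]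

end Reduced

/-- The topology of pointwise convergence of the weights. -/
instance : TopologicalSpace (Law A) := .induced (fun p ↦ ⇑p.weights) inferInstance

lemma continuous_weights (a : A) : Continuous fun p : Law A ↦ p.weights a :=
  (continuous_apply a).comp continuous_induced_dom

instance [Finite A] : CompactSpace (Law A) := by
  have := Fintype.ofFinite A
  refine ⟨(Topology.IsInducing.induced _).isCompact_iff.2 ?_⟩
  convert isCompact_stdSimplex ℝ A
  ext w
  refine ⟨?_, fun hw ↦ ⟨⟨Finsupp.equivFunOnFinite.symm w, hw.1, ?_⟩, trivial, rfl⟩⟩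
  · rintro ⟨p, -, rfl⟩
    exact ⟨p.weights_nonneg, (Finsupp.sum_fintype _ _ fun _ ↦ rfl).symm.trans p.total⟩
  · exact (Finsupp.sum_fintype _ _ fun _ ↦ rfl).trans hw.2

@[fun_prop]
lemma continuous_entropy [Finite A] : Continuous (entropy (A := A)) := by
  have := Fintype.ofFinite A
  simp only [funext entropy_eq_sum]
  exact continuous_finsetSum _ fun a _ ↦ continuous_negMulLog.comp (continuous_weights a)

section Potential

variable {G : Type*} [AddCommGroup G]

instance [Finite G] : ContinuousAdd (Law G) := by
  classical
  have := Fintype.ofFinite G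
  refine ⟨continuous_induced_rng.2 (continuous_pi fun a ↦ ?_)⟩
  have hweights (u : Law G × Law G) : (u.1 + u.2).weights a =
      ∑ x, u.1.weights x * ∑ y, u.2.weights y * if x + y = a then 1 else 0 := by
    rw [← expect_indicator_eq_weights, expect_law_add, expect_eq_sum]
    simp only [expect_eq_sum]
  simp only [comp_def, hweights]
  have := continuous_weights (A := G)
  fun_prop

/-- The functional minimised in the entropic polynomial Freiman–Ruzsa theorem, up to an additive
constant: `d[X ; Y] + η (d[μ ; X] + d[μ ; Y])` for the Ruzsa distance `d` and independent `X ∼ p`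
and `Y ∼ q`. -/
def potential (η : ℝ) (μ p q : Law G) : ℝ :=
  H[p + q] + η * (H[μ + p] + H[μ + q]) - (1 + η) / 2 * (H[p] + H[q])

/-- `p` and `q` minimise the potential. -/
def IsPotentialMin (η : ℝ) (μ p q : Law G) : Prop :=
  ∀ p' q', potential η μ p q ≤ potential η μ p' q'

lemma exists_isPotentialMin [Finite G] (η : ℝ) (μ : Law G) : ∃ p q, IsPotentialMin η μ p q := by
  have hcont : Continuous fun u : Law G × Law G ↦ potential η μ u.1 u.2 := by
    simp only [potential]
    fun_prop
  have : Nonempty (Law G) := ⟨μ⟩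
  obtain ⟨⟨p, q⟩, -, hmin⟩ := isCompact_univ.exists_isMinOn Set.univ_nonempty hcont.continuousOn
  exact ⟨p, q, fun p' q' ↦ isMinOn_univ_iff.1 hmin (p', q')⟩

variable {η : ℝ} {μ p q : Law G}

/-- Minimality at the sums `pᵢ + pⱼ` and, on average, at the fibres of these sums. -/
lemma IsPotentialMin.two_mul_le (h : IsPotentialMin η μ p q) (hη : 0 ≤ η) (p₁ p₂ p₃ p₄ : Law G) :
    2 * potential η μ p q ≤ H[p₁ + p₂ + (p₃ + p₄)] + fibreSumEntropy p₁ p₂ p₃ p₄ +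
      η * (H[μ + (p₁ + p₂)] + H[μ + p₁] + (H[μ + (p₃ + p₄)] + H[μ + p₃])) -
        (1 + η) / 2 * (H[p₁] + H[p₂] + H[p₃] + H[p₄]) := by
  have hsum := h (p₁ + p₂) (p₃ + p₄)
  have hfibre := expect_mono (p := p₁ + p₂) fun s ↦ expect_mono (p := p₃ + p₄) fun t ↦
    h (fibre p₁ p₂ s) (fibre p₃ p₄ t)
  simp only [potential, expect_const, expect_add, expect_sub, expect_const_mul,
    ← fibreSumEntropy.eq_def, expect_entropy_fibre, add_comm μ, doublingMass] at hsum hfibre ⊢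
  have hμ₁ := mul_le_mul_of_nonneg_left (expect_entropy_fibre_add_le p₁ p₂ μ) hη
  have hμ₃ := mul_le_mul_of_nonneg_left (expect_entropy_fibre_add_le p₃ p₄ μ) hη
  linarith

lemma IsPotentialMin.le_fibreSumEntropy (h : IsPotentialMin η μ p q) (hη : 0 ≤ η) :
    2 * H[p + q] - H[p + q + (p + q)] - fibreSumEntropy p p q q ≤
      2 * η * (2 * H[p + q] - H[p] - H[q]) := by
  have hmin := h.two_mul_le hη p p q q
  rw [potential, add_add_add_comm p p q q] at hmin
  have hμp := entropy_add_add_add_le μ p p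
  have hμq := entropy_add_add_add_le μ q q
  rw [add_assoc] at hμp hμq
  have hself := add_le_add (entropy_add_self_add_le p q) (entropy_add_self_add_le q p)
  rw [add_comm q p] at hself
  nlinarith [mul_le_mul_of_nonneg_left (add_le_add (add_le_add hμp hμq) hself) hη]

lemma IsPotentialMin.le_fibreSumEntropy_swap (h : IsPotentialMin η μ p q) (hη : 0 ≤ η) :
    2 * H[p + q] - H[p + q + (p + q)] - fibreSumEntropy p q q p ≤
      η * (2 * H[p + q] - H[p] - H[q]) := by
  have hmin := h.two_mul_le hη p q q p
  rw [potential, add_comm q p] at hmin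
  have hμp := entropy_add_add_add_le μ p q
  have hμq := entropy_add_add_add_le μ q p
  rw [add_assoc] at hμp hμq
  rw [add_comm q p] at hμq
  nlinarith [mul_le_mul_of_nonneg_left (add_le_add hμp hμq) hη]

lemma IsPotentialMin.expect_fibre_entropy_add_self_sub_le [Module (ZMod 2) G]
    (h : IsPotentialMin η μ p q) (hη : 0 ≤ η) :
    (expect (p + p) fun s ↦ expect (q + q) fun t ↦
      H[fibre p p s + fibre q q t + (fibre p p s + fibre q q t)] -
        H[fibre p p s + fibre q q t]) ≤ 5 * η * (2 * H[p + q] - H[p] - H[q]) := by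
  have hbsg := Law.expect_fibre_entropy_add_self_sub_le p p q q
  have hcomm := fibreSumEntropy_add_entropy_comm p p q q
  have hinfo := h.le_fibreSumEntropy hη
  have hinfo' := h.le_fibreSumEntropy_swap hη
  rw [add_add_add_comm p p q q] at hbsg
  rw [add_comm q p] at hcomm
  linarith

lemma expect_entropy_add_fibre_le [Module (ZMod 2) G] (μ p q : Law G) :
    2 * (expect (p + p) fun s ↦ expect (q + q) fun t ↦ H[μ + (fibre p p s + fibre q q t)]) ≤
      H[μ + p] + H[μ + q] + fibreSumEntropy p p q q + 3 * H[p + q] - 2 * (H[p] + H[q]) := by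
  have hp := expect_mono (p := p + p) fun s ↦ expect_mono (p := q + q) fun t ↦
    entropy_add_add_add_le μ (fibre p p s) (fibre q q t)
  have hq := expect_mono (p := p + p) fun s ↦ expect_mono (p := q + q) fun t ↦
    entropy_add_add_add_le μ (fibre q q t) (fibre p p s)
  simp only [add_assoc, add_comm (fibre q q _), expect_add, expect_const, expect_entropy_fibre,
    ← fibreSumEntropy.eq_def, doublingMass] at hp hq
  have hμp := expect_entropy_fibre_add_le p p μ
  have hμq := expect_entropy_fibre_add_le q q μ
  simp only [add_comm _ μ] at hμp hμq
  have hcomm := fibreSumEntropy_add_entropy_comm p p q q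
  have hfibring := fibreSumEntropy_add_entropy_le p q q p
  have htotal := entropy_le_entropy_add_left (p + q) (p + q)
  rw [add_comm q p] at hcomm hfibring
  linarith

lemma IsPotentialMin.two_mul_entropy_add_le [Module (ZMod 2) G] (h : IsPotentialMin η μ p q)
    (hη : 0 ≤ η) (hη' : η < 1 / 13) : 2 * H[p + q] ≤ H[p] + H[q] := by
  have hmin := expect_mono (p := p + p) fun s ↦ expect_mono (p := q + q) fun t ↦
    h (fibre p p s + fibre q q t) (fibre p p s + fibre q q t)
  have hbsg := h.expect_fibre_entropy_add_self_sub_le hη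
  have hμ := mul_le_mul_of_nonneg_left (expect_entropy_add_fibre_le μ p q) hη
  simp only [potential, expect_const, expect_add, expect_sub, expect_const_mul,
    ← fibreSumEntropy.eq_def] at hmin hbsg
  nlinarith

end Potential

section Stabilizer

variable {G : Type*} [AddCommGroup G]

lemma single_add_eq_of_entropy_add_eq {p q : Law G} (h : H[p + q] = H[p]) {y : G}
    (hy : q.weights y ≠ 0) : .single y + p = p + q := by
  have hmix : iConvexComb q (fun y ↦ .single y + p) = p + q := by
    simp only [← map_add_eq_single_add, ← add_def, add_comm q]
  rw [← hmix]
  refine eq_iConvexComb_of_entropy_le (κ := fun y ↦ .single y + p) ?_ hy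
  rw [hmix, h]
  simp only [entropy_single_add, expect_const, le_refl]

variable [Module (ZMod 2) G]

/-- The subspace of those `v` for which translation by `v` fixes `p`. -/
def stabilizer (p : Law G) : Submodule (ZMod 2) G :=
  AddSubgroup.toZModSubmodule 2
    { carrier := {v | .single v + p = p}
      zero_mem' := single_zero_add p
      add_mem' := fun {v w} hv hw ↦ by
        rw [Set.mem_ofPred_eq] at hv hw ⊢
        rw [← single_add_single_add, hw, hv]
      neg_mem' := fun {v} hv ↦ by rwa [ZModModule.neg_eq_self v] }

lemma mem_stabilizer {p : Law G} {v : G} : v ∈ stabilizer p ↔ .single v + p = p := Iff.rfl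

lemma weights_add_of_mem_stabilizer {p : Law G} {v : G} (hv : v ∈ stabilizer p) (a : G) :
    p.weights (v + a) = p.weights a := by
  conv_lhs => rw [← mem_stabilizer.1 hv, ← map_add_eq_single_add]
  exact weights_map_of_injective p (add_right_injective v) a

lemma card_stabilizer_mul_weights_le [Finite G] (p : Law G) (a : G) :
    Nat.card (stabilizer p) * p.weights a ≤ 1 := by
  have := Fintype.ofFinite G
  have := Fintype.ofFinite (stabilizer p)
  calc (Nat.card (stabilizer p) * p.weights a : ℝ)
      = ∑ v : stabilizer p, p.weights (v + a) := by
        simp only [weights_add_of_mem_stabilizer (Subtype.prop _), Finset.sum_const, nsmul_eq_mul,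
          Finset.card_univ, Nat.card_eq_fintype_card]
    _ = ∑ x ∈ Finset.univ.map ⟨fun v : stabilizer p ↦ (v + a : G),
          (add_left_injective a).comp Subtype.val_injective⟩, p.weights x := by
        rw [Finset.sum_map]; rfl
    _ ≤ ∑ x, p.weights x := Finset.sum_le_univ_sum_of_nonneg p.weights_nonneg
    _ = 1 := (Finsupp.sum_fintype _ _ fun _ ↦ rfl).symm.trans p.total

lemma log_card_stabilizer_le [Finite G] (p : Law G) : log (Nat.card (stabilizer p)) ≤ H[p] := by
  have hcard : (0 : ℝ) < Nat.card (stabilizer p) := Nat.cast_pos.2 Nat.card_pos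
  rw [entropy_eq_expect, ← expect_const p (log _)]
  refine expect_mono_of_ne_zero fun a ha ↦ ?_
  have hlog := log_nonpos (mul_nonneg hcard.le (p.weights_nonneg a))
    (card_stabilizer_mul_weights_le p a)
  rw [log_mul hcard.ne' ha] at hlog
  linarith

lemma entropy_map_mkQ_stabilizer {p q : Law G} (h : H[p + q] = H[p]) :
    H[q.map (stabilizer p).mkQ] = 0 := by
  obtain ⟨y, hy⟩ := q.support_weights_nonempty
  rw [Finsupp.mem_support_iff] at hy
  have hmem {x : G} (hx : q.weights x ≠ 0) : x - y ∈ stabilizer p := by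
    rw [mem_stabilizer, sub_eq_add_neg, ZModModule.neg_eq_self, ← single_add_single_add,
      single_add_eq_of_entropy_add_eq h hy, ← single_add_eq_of_entropy_add_eq h hx,
      single_add_single_add, ZModModule.add_self, single_zero_add]
  have hsingle : q.map (stabilizer p).mkQ = .single ((stabilizer p).mkQ y) :=
    ext_expect fun f ↦ by
      rw [expect_map, expect_single, ← expect_const q (f _)]
      exact expect_congr fun x hx ↦ congrArg f ((Submodule.Quotient.eq _).2 (hmem hx))
  rw [hsingle, entropy_single]

end Stabilizer

/-- The minimisers of the potential of `μ` are uniform on cosets of one subspace, and a reduced `μ`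
sees such a subspace as expensive, so that the potential at `(μ, μ)` is not small. -/
lemma IsReduced.mul_entropy_le_entropy_add_self {G : Type*} [AddCommGroup G]
    [Module (ZMod 2) G] [Finite G] {μ : Law G} (hμ : IsReduced (1 / 4) μ) :
    1.034 * H[μ] ≤ H[μ + μ] := by
  obtain ⟨p, q, hmin⟩ := exists_isPotentialMin (1 / 20) μ
  have hdouble := hmin.two_mul_entropy_add_le (by norm_num) (by norm_num)
  have hp := entropy_le_entropy_add_right p q
  have hq := entropy_le_entropy_add_left p q
  have hquotient := entropy_sub_entropy_add_le (stabilizer p).mkQ μ q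
  rw [entropy_map_mkQ_stabilizer (by linarith)] at hquotient
  have hμquotient := entropy_le_entropy_add_right (μ.map (stabilizer p).mkQ)
    (q.map (stabilizer p).mkQ)
  have hμμ := hmin μ μ
  simp only [potential] at hμμ
  linarith [hμ (stabilizer p), log_card_stabilizer_le p, entropy_le_entropy_add_left μ p,
    entropy_le_entropy_add_right μ p, entropy_nonneg μ]

lemma reducedDoublingBound_quarter : ReducedDoublingBound (1 / 2 - 1 / 1000) (1 / 4) := by
  intro G _ _ _ p q hp
  linarith [hp.mul_entropy_le_entropy_add_self, entropy_add_self_add_le p q,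
    entropy_le_entropy_add_left p q, doublingMass.eq_def p q, entropy_nonneg p, entropy_nonneg q]

lemma exists_reducedDoublingBound {η : ℝ} (hη : 0 < η) : ∃ l, 0 < l ∧ ReducedDoublingBound η l := by
  set S := {η : ℝ | 0 ≤ η ∧ ∃ l, 0 < l ∧ ReducedDoublingBound η l}
  have hbase : (1 / 2 - 1 / 1000 : ℝ) ∈ S :=
    ⟨by norm_num, 1 / 4, by norm_num, reducedDoublingBound_quarter⟩
  have hbdd : BddBelow S := ⟨0, fun _ h ↦ h.1⟩
  have hinf : sInf S = 0 := by
    refine le_antisymm (le_of_not_gt fun hpos ↦ ?_) (le_csInf ⟨_, hbase⟩ fun _ h ↦ h.1)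
    have hlt : sInf S < 1 / 2 := (csInf_le hbdd hbase).trans_lt (by norm_num)
    have hgain := gain_pos hpos hlt
    obtain ⟨c, ⟨-, l, hl, hb⟩, hc⟩ :=
      exists_lt_of_csInf_lt ⟨_, hbase⟩ (lt_add_of_pos_right (sInf S) hgain)
    have hmem : sInf S - gain (sInf S) ∈ S :=
      ⟨by nlinarith [gain_le_sq_div hpos], _, by positivity, (hb.mono hc.le).sub_gain hpos hlt hl⟩
    linarith [csInf_le hbdd hmem]
  obtain ⟨c, ⟨-, l, hl, hb⟩, hc⟩ := exists_lt_of_csInf_lt ⟨_, hbase⟩ (hinf.trans_lt hη)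
  exact ⟨l, hl, hb.mono hc.le⟩

lemma entropy_sum_le {G : Type*} [AddCommGroup G] {ι : Type*} (s : Finset ι) (p : ι → Law G) :
    H[∑ i ∈ s, p i] ≤ ∑ i ∈ s, H[p i] := by
  classical
  induction s using Finset.induction_on with
  | empty => simp [zero_def]
  | insert a s ha ih =>
    rw [Finset.sum_insert ha, Finset.sum_insert ha]
    exact (entropy_add_le _ _).trans (add_le_add_right ih _)

lemma sum_entropy_sub_entropy_sum_le {G : Type} [AddCommGroup G] [Module (ZMod 2) G] [Finite G]
    {η l : ℝ} (hη : 0 ≤ η) (hb : ReducedDoublingBound η l) {ι : Type*} (s : Finset ι)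
    {p : ι → Law G} (hp : ∀ i, IsReduced l (p i)) :
    ∑ i ∈ s, H[p i] - H[∑ i ∈ s, p i] ≤ s.card * (η * ∑ i ∈ s, H[p i]) := by
  classical
  induction s using Finset.induction_on with
  | empty => simp [entropy_nonneg]
  | insert a s ha ih =>
    have hmass := hb G (p a) (∑ i ∈ s, p i) (hp a)
    rw [doublingMass] at hmass
    rw [Finset.sum_insert ha, Finset.sum_insert ha, Finset.card_insert_of_notMem ha]
    push_cast
    have hsum := mul_le_mul_of_nonneg_left (entropy_sum_le s p) hη
    have ha0 : 0 ≤ (s.card : ℝ) * (η * H[p a]) :=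
      mul_nonneg s.card.cast_nonneg (mul_nonneg hη (entropy_nonneg _))
    linarith

theorem exists_submodule_sum_entropy_map_le {ι : Type*} [Fintype ι] {ε : ℝ} (hε : 0 < ε) :
    ∃ L, 0 < L ∧ ∀ (G : Type) [AddCommGroup G] [Module (ZMod 2) G] [Finite G] (p : ι → Law G),
      ∃ V : Submodule (ZMod 2) G, log (Nat.card V) ≤ L * ∑ i, H[p i] ∧
        ∑ i, H[(p i).map V.mkQ] - ε * ∑ i, H[p i] ≤ H[∑ i, (p i).map V.mkQ] := by
  have hk : (0 : ℝ) < Fintype.card ι + 1 := by positivity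
  obtain ⟨l, hl, hb⟩ := exists_reducedDoublingBound (div_pos hε hk)
  refine ⟨l⁻¹, inv_pos.2 hl, fun G _ _ _ p ↦ ?_⟩
  obtain ⟨V, hcost, hred⟩ := exists_isReduced l p
  have hmono : ∑ i, H[(p i).map V.mkQ] ≤ ∑ i, H[p i] :=
    Finset.sum_le_sum fun i _ ↦ entropy_map_le _ _
  have hnonneg : 0 ≤ ∑ i, H[(p i).map V.mkQ] := Finset.sum_nonneg fun i _ ↦ entropy_nonneg _
  refine ⟨V, (le_inv_mul_iff₀ hl).2 (by linarith), ?_⟩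
  have hsum := sum_entropy_sub_entropy_sum_le (div_nonneg hε.le hk.le) hb Finset.univ hred
  have hconst : (Fintype.card ι : ℝ) * (ε / (Fintype.card ι + 1)) ≤ ε := by
    rw [mul_div_assoc', div_le_iff₀ hk]
    linarith
  rw [Finset.card_univ, ← mul_assoc] at hsum
  linarith [mul_le_mul hconst hmono hnonneg hε.le]

/-- The law of `k` independent variables. -/
def pi : (k : ℕ) → (Fin k → Law A) → Law (Fin k → A)
  | 0, _ => .single Fin.elim0
  | k + 1, p => (prod (p 0) (pi k fun i ↦ p i.succ)).map fun z ↦ Fin.cons z.1 z.2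

lemma weights_pi (k : ℕ) (p : Fin k → Law A) (x : Fin k → A) :
    (pi k p).weights x = ∏ i, (p i).weights (x i) := by
  induction k with
  | zero => simp [pi, Subsingleton.elim x Fin.elim0]
  | succ k ih =>
    have hinj : Injective fun z : A × (Fin k → A) ↦ (Fin.cons z.1 z.2 : Fin (k + 1) → A) :=
      fun z w h ↦ Prod.ext_iff.2 (Fin.cons_inj.1 h)
    rw [pi, ← Fin.cons_self_tail x, weights_map_of_injective _ hinj (x 0, Fin.tail x), prod,
      weights_joint, ih, Fin.prod_univ_succ]
    rfl

lemma map_sum_pi {G : Type*} [AddCommGroup G] (k : ℕ) (p : Fin k → Law G) :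
    (pi k p).map (fun x ↦ ∑ i, x i) = ∑ i, p i := by
  induction k with
  | zero => simp [pi, zero_def]
  | succ k ih =>
    rw [Fin.sum_univ_succ, ← ih, ← map_prod_add, pi]
    exact ext_expect fun f ↦ by simp [Fin.sum_univ_succ]

lemma exists_weights_eq {p : A → ℝ} (hp : IsDist p) : ∃ μ : Law A, ⇑μ.weights = p := by
  have hfin : p.support.Finite := by
    by_contra h
    exact zero_ne_one ((finsum_of_infinite_support h).symm.trans hp.2)
  refine ⟨⟨Finsupp.ofSupportFinite p hfin, fun a ↦ hp.1 a, ?_⟩, rfl⟩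
  rw [← hp.2, finsum_eq_sum p hfin]
  exact Finset.sum_subset (fun a ha ↦ hfin.mem_toFinset.2 (Finsupp.mem_support_iff.1 ha))
    fun a _ ha ↦ Finsupp.notMem_support_iff.1 ha

lemma ent_weights (p : Law A) : ent ⇑p.weights = H[p] :=
  finsum_eq_sum_of_support_subset _ fun a ha ↦ Finsupp.mem_support_iff.2 fun h ↦ ha (by simp [h])

lemma push_weights (f : A → B) (p : Law A) : push f ⇑p.weights = ⇑(p.map f).weights := by
  classical
  ext b
  rw [← expect_indicator_eq_weights, expect_map, push, finsum_mem_def,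
    finsum_eq_sum_of_support_subset (s := p.weights.support) _ fun a ha ↦ ?_]
  · simp [expect, Finsupp.sum, Set.indicator_apply]
  · exact Finsupp.mem_support_iff.2 fun h ↦ ha (by simp [h])

lemma indepSum_weights {G : Type*} [AddCommGroup G] (k : ℕ) (p : Fin k → Law G) :
    (indepSum k fun i ↦ ⇑(p i).weights) = ⇑(∑ i, p i).weights := by
  rw [← map_sum_pi, ← push_weights, indepSum]
  exact congrArg _ (funext fun x ↦ (weights_pi k p x).symm)

lemma ent_unifOn [Finite A] (s : Set A) : ent (unifOn s) = log (Nat.card s) := by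
  classical
  have := Fintype.ofFinite A
  have hterm (a : A) : negMulLog (unifOn s a) =
      if a ∈ s then (Nat.card s : ℝ)⁻¹ * log (Nat.card s) else 0 := by
    by_cases ha : a ∈ s <;> simp [unifOn, ha, negMulLog]
  rw [ent, finsum_eq_sum_of_fintype]
  simp only [hterm]
  rw [← Finset.sum_filter, Finset.sum_const, nsmul_eq_mul, ← Fintype.card_subtype,
    ← Nat.card_eq_fintype_card]
  rcases eq_or_ne (Nat.card s) 0 with hs | hs
  · rw [hs, Nat.cast_zero, log_zero, mul_zero, mul_zero]
  · exact mul_inv_cancel_left₀ (Nat.cast_ne_zero.2 hs) _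

end Law

/-- For every `k ≥ 2` and `ε > 0` there is `L > 0` such that for independent
`X₁, …, X_k` there is a subspace `V` with `H[𝐔_V] ≤ L ∑ H[Xᵢ]` and
`H[π_V(X₁)+⋯+π_V(X_k)] ≥ ∑ H[π_V(Xᵢ)] − ε ∑ H[Xᵢ]`. -/
theorem statement4 :
    ∀ k : ℕ, 2 ≤ k → ∀ ε : ℝ, 0 < ε → ∃ L : ℝ, 0 < L ∧
      ∀ (n : ℕ) (p : Fin k → Fvec n → ℝ), (∀ i, IsDist (p i)) →
        ∃ V : Submodule (ZMod 2) (Fvec n),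
          ent (unifOn (V : Set (Fvec n))) ≤ L * ∑ i, ent (p i) ∧
          ent (indepSum k fun i => push V.mkQ (p i)) ≥
            (∑ i, ent (push V.mkQ (p i))) - ε * ∑ i, ent (p i) := by
  intro k _ ε hε
  obtain ⟨L, hL, hmain⟩ := Law.exists_submodule_sum_entropy_map_le (ι := Fin k) hε
  refine ⟨L, hL, fun n p hp ↦ ?_⟩
  choose μ hμ using fun i ↦ Law.exists_weights_eq (hp i)
  obtain rfl : (fun i ↦ ⇑(μ i).weights) = p := funext hμ
  obtain ⟨V, hV, hsum⟩ := hmain (Fvec n) μ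
  refine ⟨V, ?_, ?_⟩
  · exact (Law.ent_unifOn _).trans_le (hV.trans_eq (by simp only [Law.ent_weights]))
  · simpa only [Law.push_weights, Law.indepSum_weights, Law.ent_weights] using hsum
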